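/- Let n ≥ 1 and let Q and Q′ be real normal defining functions of dimension n, defining hypersurfaces M and M′ with complexifications ℳ and ℳ′. Assume M is of class 𝒞 at 0, and let ℋ = (f,g,f̃,g̃) be an HSPM sending (ℳ,0) into (ℳ′,0). Then at least one of the following holds: (i) ℋ is transversally null (g ≡ 0 and g̃ ≡ 0 near 0) and Q′(f(z,w), f̃(χ,τ), 0) = 0 for all (z,w) and (χ,τ) near 0; or (ii) ℋ is Segre transversal to ℳ′ at 0 (∂g/∂w(0,0) ≠ 0), ℋ is totally Segre nondegenerate at 0, there exists a point (z₀,w₀,χ₀,τ₀) with w₀ = Q(z₀,χ₀,τ₀) at which the Jacobians of (f,g) at (z₀,w₀) and of (f̃,g̃) at (χ₀,τ₀) are both invertible (so ℋ is a biholomorphism near a point of ℳ), and moreover M′ is of class 𝒞 at 0. -/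

import Mathlib

open Filter Topology Complex

namespace HSPMpaper

variable {n : ℕ}

/-- Partial derivative of `F` in the `i`-th coordinate direction. -/
noncomputable def pd (i : Fin n) (F : (Fin n → ℂ) → ℂ) : (Fin n → ℂ) → ℂ :=
  fun z => fderiv ℂ F z (Pi.single i 1)

/-- Iterated partial derivative `∂^α` for a multi-index `α`. -/
noncomputable def mpd (α : Fin n → ℕ) (F : (Fin n → ℂ) → ℂ) : (Fin n → ℂ) → ℂ :=
  ((List.ofFn fun i : Fin n => (pd i)^[α i]).foldr (· ∘ ·) id) F

/-- Componentwise complex conjugation on `ℂⁿ`. -/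
def conjV (z : Fin n → ℂ) : Fin n → ℂ := fun i => starRingEnd ℂ (z i)

/-- The conjugate defining function `Q̄(χ,z,τ) = conj (Q (conj χ) (conj z) (conj τ))`. -/
def QBar (Q : (Fin n → ℂ) → (Fin n → ℂ) → ℂ → ℂ) : (Fin n → ℂ) → (Fin n → ℂ) → ℂ → ℂ :=
  fun χ z τ => starRingEnd ℂ (Q (conjV χ) (conjV z) (starRingEnd ℂ τ))

/-- `Q` is a normal defining function (of dimension `n`): holomorphic near the origin of
`ℂⁿ × ℂⁿ × ℂ` and satisfying `Q(0,χ,τ) = τ` and `Q(z,0,τ) = τ` near `0`. -/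
def IsNormalDF (Q : (Fin n → ℂ) → (Fin n → ℂ) → ℂ → ℂ) : Prop :=
  (∀ᶠ p in 𝓝 (0 : (Fin n → ℂ) × (Fin n → ℂ) × ℂ),
      AnalyticAt ℂ (fun q : (Fin n → ℂ) × (Fin n → ℂ) × ℂ => Q q.1 q.2.1 q.2.2) p) ∧
  (∀ᶠ p in 𝓝 (0 : (Fin n → ℂ) × (Fin n → ℂ) × ℂ),
      Q 0 p.2.1 p.2.2 = p.2.2 ∧ Q p.1 0 p.2.2 = p.2.2)

/-- `Q` is a real normal defining function: normal and `Q(z,χ,Q̄(χ,z,w)) = w` near `0`. -/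
def IsRealNormalDF (Q : (Fin n → ℂ) → (Fin n → ℂ) → ℂ → ℂ) : Prop :=
  IsNormalDF Q ∧
  ∀ᶠ p in 𝓝 (0 : (Fin n → ℂ) × (Fin n → ℂ) × ℂ),
    Q p.1 p.2.1 (QBar Q p.2.1 p.1 p.2.2) = p.2.2

/-- `(f,g,f̃,g̃)` is a holomorphic Segre preserving map sending `(ℳ,0)` into `(ℳ',0)`. -/
def IsHSPM (Q Q' : (Fin n → ℂ) → (Fin n → ℂ) → ℂ → ℂ)
    (f : (Fin n → ℂ) → ℂ → Fin n → ℂ) (g : (Fin n → ℂ) → ℂ → ℂ)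
    (ft : (Fin n → ℂ) → ℂ → Fin n → ℂ) (gt : (Fin n → ℂ) → ℂ → ℂ) : Prop :=
  (∀ᶠ p in 𝓝 (0 : (Fin n → ℂ) × ℂ), AnalyticAt ℂ (fun q : (Fin n → ℂ) × ℂ => f q.1 q.2) p) ∧
  (∀ᶠ p in 𝓝 (0 : (Fin n → ℂ) × ℂ), AnalyticAt ℂ (fun q : (Fin n → ℂ) × ℂ => g q.1 q.2) p) ∧
  (∀ᶠ p in 𝓝 (0 : (Fin n → ℂ) × ℂ), AnalyticAt ℂ (fun q : (Fin n → ℂ) × ℂ => ft q.1 q.2) p) ∧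
  (∀ᶠ p in 𝓝 (0 : (Fin n → ℂ) × ℂ), AnalyticAt ℂ (fun q : (Fin n → ℂ) × ℂ => gt q.1 q.2) p) ∧
  f 0 0 = 0 ∧ g 0 0 = 0 ∧ ft 0 0 = 0 ∧ gt 0 0 = 0 ∧
  ∀ᶠ p in 𝓝 (0 : (Fin n → ℂ) × (Fin n → ℂ) × ℂ),
    g p.1 (Q p.1 p.2.1 p.2.2) =
      Q' (f p.1 (Q p.1 p.2.1 p.2.2)) (ft p.2.1 p.2.2) (gt p.2.1 p.2.2)

/-- `M` is of finite type at `0`: `(z,χ) ↦ Q(z,χ,0)` does not vanish identically near `0`. -/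
def FiniteType (Q : (Fin n → ℂ) → (Fin n → ℂ) → ℂ → ℂ) : Prop :=
  ¬ ∀ᶠ p in 𝓝 (0 : (Fin n → ℂ) × (Fin n → ℂ)), Q p.1 p.2 0 = 0

/-- Jacobian matrix of `z ↦ f(z,0)` at `z`. -/
noncomputable def jacz (f : (Fin n → ℂ) → ℂ → Fin n → ℂ) (z : Fin n → ℂ) :
    Matrix (Fin n) (Fin n) ℂ :=
  Matrix.of fun i j => pd j (fun z' => f z' 0 i) z

/-- `ℋ` is Segre transversal to `ℳ'` at `0`: `∂g/∂w(0,0) ≠ 0`. -/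
noncomputable def SegreTransversal (g : (Fin n → ℂ) → ℂ → ℂ) : Prop :=
  deriv (fun w => g 0 w) 0 ≠ 0

/-- `ℋ` is totally Segre nondegenerate at `0`. -/
def TotallySegreNondeg (f ft : (Fin n → ℂ) → ℂ → Fin n → ℂ) : Prop :=
  (¬ ∀ᶠ z in 𝓝 (0 : Fin n → ℂ), (jacz f z).det = 0) ∧
  (¬ ∀ᶠ χ in 𝓝 (0 : Fin n → ℂ), (jacz ft χ).det = 0)

/-- `ℋ` is transversally null: `g ≡ 0` and `g̃ ≡ 0` near `0`. -/
def TransversallyNull (g gt : (Fin n → ℂ) → ℂ → ℂ) : Prop :=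
  (∀ᶠ p in 𝓝 (0 : (Fin n → ℂ) × ℂ), g p.1 p.2 = 0) ∧
  (∀ᶠ p in 𝓝 (0 : (Fin n → ℂ) × ℂ), gt p.1 p.2 = 0)

/-- The `k`-th coordinate direction in `ℂⁿ × ℂ`. -/
noncomputable def dirCT (n : ℕ) (k : Fin (n + 1)) : (Fin n → ℂ) × ℂ :=
  if h : (k : ℕ) < n then (Pi.single ⟨k, h⟩ 1, 0) else (0, 1)

/-- `M` is holomorphically nondegenerate at `0`: for some `K`, the map
`(χ,τ) ↦ (∂_z^α Q(0,χ,τ))_{|α| ≤ K}` has generic rank `n+1`. -/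
def HolNondeg (Q : (Fin n → ℂ) → (Fin n → ℂ) → ℂ → ℂ) : Prop :=
  ∃ K : ℕ, ∃ A : Fin (n + 1) → Fin n → ℕ, (∀ j, (∑ i, A j i) ≤ K) ∧
    ¬ ∀ᶠ p in 𝓝 (0 : (Fin n → ℂ) × ℂ),
      (Matrix.of fun j k : Fin (n + 1) =>
        fderiv ℂ (fun q : (Fin n → ℂ) × ℂ => mpd (A j) (fun z => Q z q.1 q.2) 0) p
          (dirCT n k)).det = 0

/-- `M` is of class `𝒞` at `0`: for some `K`, the map
`χ ↦ (∂_z^α Q(0,χ,0))_{|α| ≤ K}` has generic rank `n`. -/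
def ClassC (Q : (Fin n → ℂ) → (Fin n → ℂ) → ℂ → ℂ) : Prop :=
  ∃ K : ℕ, ∃ A : Fin n → Fin n → ℕ, (∀ j, (∑ i, A j i) ≤ K) ∧
    ¬ ∀ᶠ χ in 𝓝 (0 : Fin n → ℂ),
      (Matrix.of fun j k : Fin n =>
        pd k (fun χ' => mpd (A j) (fun z => Q z χ' 0) 0) χ).det = 0

/-- `M` is finitely nondegenerate at `0`: for some `K`, the vectors
`∂_χ ∂_z^α Q(0,0,0)`, `|α| ≤ K`, span `ℂⁿ`. -/
def FinNondeg (Q : (Fin n → ℂ) → (Fin n → ℂ) → ℂ → ℂ) : Prop :=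
  ∃ K : ℕ, Submodule.span ℂ
    {v : Fin n → ℂ | ∃ α : Fin n → ℕ, (∑ i, α i) ≤ K ∧
      v = fun i => pd i (fun χ => mpd α (fun z => Q z χ 0) 0) 0} = ⊤

/-- Full Jacobian matrix of `(z,w) ↦ (f(z,w), g(z,w))` at `p ∈ ℂⁿ × ℂ`. -/
noncomputable def jacFull (f : (Fin n → ℂ) → ℂ → Fin n → ℂ) (g : (Fin n → ℂ) → ℂ → ℂ)
    (p : (Fin n → ℂ) × ℂ) : Matrix (Fin (n + 1)) (Fin (n + 1)) ℂ :=
  Matrix.of fun i k =>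
    fderiv ℂ (fun q : (Fin n → ℂ) × ℂ => (Fin.snoc (f q.1 q.2) (g q.1 q.2) : Fin (n + 1) → ℂ) i) p (dirCT n k)

/-- The degree-`d` homogeneous term of the Taylor series of `φ` at `0`. -/
noncomputable def homogTerm (d : ℕ) (φ : (Fin n → ℂ) → ℂ) : (Fin n → ℂ) → ℂ :=
  fun z => iteratedFDeriv ℂ d φ 0 (fun _ => z) / (d.factorial : ℂ)

/-- The order of vanishing of `φ` at `0`. -/
noncomputable def vanishOrder (φ : (Fin n → ℂ) → ℂ) : ℕ :=
  sInf {d | homogTerm d φ ≠ 0}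

section Analytic

variable {X Y : Type*} [NormedAddCommGroup X] [NormedSpace ℂ X]
  [NormedAddCommGroup Y] [NormedSpace ℂ Y]

theorem analyticAt_fderiv_apply [CompleteSpace Y] {F : X → Y} {x : X} (hF : AnalyticAt ℂ F x)
    (v : X) : AnalyticAt ℂ (fun y => fderiv ℂ F y v) x :=
  (ContinuousLinearMap.apply ℂ Y v).analyticAt _ |>.comp hF.fderiv

theorem eventually_zero_of_frequently_locally_zero {F : X → ℂ} {x₀ : X}
    (hF : AnalyticAt ℂ F x₀) (h : ∃ᶠ x in 𝓝 x₀, ∀ᶠ y in 𝓝 x, F y = 0) :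
    ∀ᶠ y in 𝓝 x₀, F y = 0 := by
  obtain ⟨r, hr, hball⟩ := Metric.eventually_nhds_iff_ball.1 hF.eventually_analyticAt
  obtain ⟨x, hx, hxr⟩ := (h.and_eventually (Metric.ball_mem_nhds x₀ hr)).exists
  have hz := AnalyticOnNhd.eqOn_zero_of_preconnected_of_eventuallyEq_zero
    (f := F) (U := Metric.ball x₀ r) hball (convex_ball x₀ r).isPreconnected hxr hx
  filter_upwards [Metric.ball_mem_nhds x₀ hr] with y hy using hz hy

theorem eventually_zero_of_locally_zero_slices {F : X × Y → ℂ} {x₀ : X} {y₀ : Y}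
    (hF : AnalyticAt ℂ F (x₀, y₀))
    (h : ∃ᶠ y₁ in 𝓝 y₀, ∀ᶠ y in 𝓝 y₁, ∀ᶠ x in 𝓝 x₀, F (x, y) = 0) :
    ∀ᶠ p in 𝓝 (x₀, y₀), F p = 0 := by
  obtain ⟨r, hr, hball⟩ := Metric.eventually_nhds_iff_ball.1 hF.eventually_analyticAt
  obtain ⟨y₁, hy₁, hyr⟩ := (h.and_eventually (Metric.ball_mem_nhds y₀ hr)).exists
  have hloc : ∀ᶠ p in 𝓝 (x₀, y₁), F p = 0 := by
    rw [nhds_prod_eq]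
    have h1 : ∀ᶠ y in 𝓝 y₁, y ∈ Metric.ball y₀ r ∧ ∀ᶠ x in 𝓝 x₀, F (x, y) = 0 :=
      (Metric.isOpen_ball.mem_nhds hyr |> fun h => (h : ∀ᶠ y in 𝓝 y₁, y ∈ Metric.ball y₀ r)).and hy₁
    filter_upwards [prod_mem_prod (Metric.ball_mem_nhds x₀ hr) h1] with p hp
    obtain ⟨hp1, hp2, hp3⟩ := hp
    have := AnalyticOnNhd.eqOn_zero_of_preconnected_of_eventuallyEq_zero
      (f := fun x => F (x, p.2)) (U := Metric.ball x₀ r)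
      (fun x hx => by
        have h2 : AnalyticAt ℂ F (x, p.2) := hball _ (by
          rw [← ball_prod_same]; exact ⟨hx, hp2⟩)
        exact h2.comp (f := fun x => (x, p.2)) (by fun_prop))
      (convex_ball x₀ r).isPreconnected (Metric.mem_ball_self hr) hp3
    exact this hp1
  have hz := AnalyticOnNhd.eqOn_zero_of_preconnected_of_eventuallyEq_zero
    (f := F) (U := Metric.ball (x₀, y₀) r) hball (convex_ball _ r).isPreconnected
    (by rw [← ball_prod_same]; exact ⟨Metric.mem_ball_self hr, hyr⟩) hloc
  filter_upwards [Metric.ball_mem_nhds (x₀, y₀) hr] with p hp using hz hp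

theorem eventually_zero_or_of_mul {F G : X → ℂ} {x₀ : X}
    (hF : AnalyticAt ℂ F x₀) (hG : AnalyticAt ℂ G x₀)
    (h : ∀ᶠ x in 𝓝 x₀, F x * G x = 0) :
    (∀ᶠ x in 𝓝 x₀, F x = 0) ∨ ∀ᶠ x in 𝓝 x₀, G x = 0 := by
  refine or_iff_not_imp_left.2 fun hne => ?_
  refine eventually_zero_of_frequently_locally_zero hG ?_
  have hne' : ∃ᶠ x in 𝓝 x₀, F x ≠ 0 := Filter.not_eventually.1 hne
  refine (hne'.and_eventually (h.eventually_nhds.and hF.eventually_analyticAt)).mono ?_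
  rintro x ⟨hx, hx', hFx⟩
  filter_upwards [hx', hFx.continuousAt.eventually_ne hx] with y h1 h2
  exact (mul_eq_zero.1 h1).resolve_left h2

/-- An analytic function on a convex open set vanishes along a line through a point where all
iterated derivatives in the direction of that line vanish. -/
theorem eq_zero_on_line_of_iterated_fderiv_eq_zero {F : X → ℂ} {U : Set X} (hU : IsOpen U)
    (hc : Convex ℝ U) (D : (X → ℂ) → X → ℂ) (e : X)
    (hD : ∀ G : X → ℂ, AnalyticOnNhd ℂ G U →
      AnalyticOnNhd ℂ (D G) U ∧ ∀ x ∈ U, D G x = fderiv ℂ G x e)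
    (hF : AnalyticOnNhd ℂ F U) {x : X} (hx : x ∈ U) (h : ∀ k, (D^[k] F) x = 0) {t : ℂ}
    (ht : x + t • e ∈ U) : F (x + t • e) = 0 := by
  have hline : AnalyticOnNhd ℂ (fun s : ℂ => x + s • e) Set.univ := fun s _ => by fun_prop
  have hcont : Continuous (fun s : ℂ => x + s • e) := by fun_prop
  set V : Set ℂ := (fun s : ℂ => x + s • e) ⁻¹' U with hV
  have hVo : IsOpen V := hU.preimage hcont
  have hVc : Convex ℝ V := by
    intro a ha b hb s u hs hu hsu
    have := hc ha hb hs hu hsu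
    show x + (s • a + u • b) • e ∈ U
    convert this using 1
    have : x = s • x + u • x := by rw [← add_smul, hsu, one_smul]
    conv_lhs => rw [this]
    simp only [smul_add, add_smul, smul_assoc]
    abel
  have hG : ∀ k, ∀ G : X → ℂ, AnalyticOnNhd ℂ G U → AnalyticOnNhd ℂ (D^[k] G) U ∧
      ∀ s ∈ V, iteratedDeriv k (fun s : ℂ => G (x + s • e)) s = (D^[k] G) (x + s • e) := by
    intro k
    induction k with
    | zero => intro G hG; exact ⟨hG, fun s _ => by simp⟩
    | succ k ih =>
      intro G hG
      obtain ⟨h1, h2⟩ := ih (D G) (hD G hG).1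
      refine ⟨by simpa using h1, fun s hs => ?_⟩
      rw [iteratedDeriv_succ', Function.iterate_succ_apply, ← h2 s hs]
      refine Filter.EventuallyEq.iteratedDeriv_eq k ?_
      filter_upwards [hVo.mem_nhds hs] with u hu
      rw [(hD G hG).2 _ hu]
      have h3 : HasDerivAt (fun s : ℂ => x + s • e) e u := by
        simpa using ((hasDerivAt_id u).smul_const e).const_add x
      exact ((hG _ hu).differentiableAt.hasFDerivAt.comp_hasDerivAt u h3).deriv
  have hφ : AnalyticOnNhd ℂ (fun s : ℂ => F (x + s • e)) V := fun s hs =>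
    (hF _ hs).comp (f := fun s : ℂ => x + s • e) (hline s trivial)
  have h0 : (0 : ℂ) ∈ V := by simpa [hV] using hx
  have htop : analyticOrderAt (fun s : ℂ => F (x + s • e)) 0 = ⊤ := by
    refine ENat.eq_top_iff_forall_ge.2 fun m => ?_
    rw [natCast_le_analyticOrderAt_iff_iteratedDeriv_eq_zero (hφ 0 h0)]
    intro i _
    rw [(hG i F hF).2 0 h0]
    simpa using h i
  exact hφ.eqOn_zero_of_preconnected_of_eventuallyEq_zero hVc.isPreconnected h0
    (analyticOrderAt_eq_top.1 htop) ht

end Analytic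

section Degenerate

theorem eventually_nhds_slice {E F : Type*} [TopologicalSpace E] [TopologicalSpace F] [Zero E] [Zero F]
    {p : E × F → Prop} (h : ∀ᶠ x in 𝓝 (0 : E × F), p x) :
    ∀ᶠ y in 𝓝 (0 : F), ∀ᶠ x in 𝓝 ((0 : E), y), p x := by
  have hc : Continuous fun y : F => ((0 : E), y) := by fun_prop
  exact hc.tendsto' 0 0 rfl |>.eventually h.eventually_nhds

theorem eventually_nhds_slice_left {E F : Type*} [TopologicalSpace E] [TopologicalSpace F]
    {p : E × F → Prop} {x₀ : E} {y : F}
    (h : ∀ᶠ x in 𝓝 (x₀, y), p x) : ∀ᶠ z in 𝓝 x₀, ∀ᶠ x in 𝓝 (z, y), p x := by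
  have hc : Continuous fun z : E => (z, y) := by fun_prop
  exact hc.tendsto x₀ |>.eventually h.eventually_nhds

variable {E F G : Type*} [NormedAddCommGroup E] [NormedSpace ℂ E]
  [NormedAddCommGroup F] [NormedSpace ℂ F] [NormedAddCommGroup G] [NormedSpace ℂ G]

/-- If `Ψ` vanishes on the family of graphs `w = q (z, p)` and `h` is degenerate in directions in
which the graphs move, then the transversal derivative of `Ψ` vanishes on these graphs as well. -/
theorem fderiv_eq_zero_of_degenerate [CompleteSpace G] {q : E × F → ℂ} (hq : AnalyticAt ℂ q 0) (hq0 : q 0 = 0)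
    {h : F → G} (hh : AnalyticAt ℂ h 0) (h0 : h 0 = 0)
    (hdeg : ∃ᶠ p₀ in 𝓝 (0 : F), ∀ᶠ p in 𝓝 p₀, ∃ v, fderiv ℂ h p v = 0 ∧
      ¬ ∀ᶠ z in 𝓝 (0 : E), fderiv ℂ q (z, p) (0, v) = 0)
    {Ψ : E × ℂ × G → ℂ} (hΨ : AnalyticAt ℂ Ψ 0)
    (hz : ∀ᶠ x in 𝓝 (0 : E × F), Ψ (x.1, q x, h x.2) = 0) :
    ∀ᶠ x in 𝓝 (0 : E × F), fderiv ℂ Ψ (x.1, q x, h x.2) (0, 1, 0) = 0 := by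
  have hh' : AnalyticAt ℂ h (0 : E × F).2 := hh
  have hγ : AnalyticAt ℂ (fun x : E × F => (x.1, q x, h x.2)) 0 :=
    analyticAt_fst.prod (hq.prod (hh'.comp analyticAt_snd))
  have hγ0 : (fun x : E × F => (x.1, q x, h x.2)) 0 = 0 := by simp [hq0, h0]
  have hD : AnalyticAt ℂ (fun x : E × F => fderiv ℂ Ψ (x.1, q x, h x.2) (0, 1, 0)) 0 := by
    have h1 : AnalyticAt ℂ (fun y => fderiv ℂ Ψ y (0, 1, 0))
        ((fun x : E × F => (x.1, q x, h x.2)) 0) := by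
      rw [hγ0]; exact analyticAt_fderiv_apply hΨ _
    exact h1.comp (f := fun x : E × F => (x.1, q x, h x.2)) hγ
  refine eventually_zero_of_locally_zero_slices (x₀ := (0 : E)) (y₀ := (0 : F)) hD ?_
  have hΨ' : ∀ᶠ x in 𝓝 (0 : E × F), AnalyticAt ℂ Ψ (x.1, q x, h x.2) :=
    hγ.continuousAt.eventually (by rw [hγ0]; exact hΨ.eventually_analyticAt)
  have hh2 : ∀ᶠ x in 𝓝 (0 : E × F), AnalyticAt ℂ h x.2 :=
    continuousAt_snd.eventually hh'.eventually_analyticAt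
  have hgood := eventually_nhds_slice
    (hz.and (hq.eventually_analyticAt.and (hh2.and (hΨ'.and hD.eventually_analyticAt))))
  refine (hdeg.and_eventually hgood.eventually_nhds).mono ?_
  rintro p₀ ⟨hp₀, hg⟩
  filter_upwards [hp₀, hg] with p ⟨v, hv, hv'⟩ hg
  have hslice : AnalyticAt ℂ (fun z : E => (z, p)) 0 := by fun_prop
  refine (eventually_zero_or_of_mul (x₀ := (0 : E)) (F := fun z => fderiv ℂ q (z, p) (0, v))
    (G := fun z => fderiv ℂ Ψ (z, q (z, p), h p) (0, 1, 0)) ?_ ?_ ?_).resolve_left hv'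
  · exact (analyticAt_fderiv_apply hg.self_of_nhds.2.1 _).comp
      (f := fun z : E => (z, p)) hslice
  · exact (hg.self_of_nhds.2.2.2.2).comp (f := fun z : E => (z, p)) hslice
  · filter_upwards [eventually_nhds_slice_left hg] with z hz
    obtain ⟨-, hq1, hh1, hΨ1, -⟩ := hz.self_of_nhds
    have hzero : (fun x : E × F => Ψ (x.1, q x, h x.2)) =ᶠ[𝓝 (z, p)] fun _ => 0 :=
      hz.mono fun x hx => hx.1
    have hder : HasFDerivAt (fun x : E × F => (x.1, q x, h x.2)) _ (z, p) :=
      hasFDerivAt_fst.prodMk (hq1.differentiableAt.hasFDerivAt.prodMk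
        (hh1.differentiableAt.hasFDerivAt.comp (z, p) hasFDerivAt_snd))
    have h2 := (hΨ1.differentiableAt.hasFDerivAt.comp (z, p) hder).congr_of_eventuallyEq
      hzero.symm
    have h3 := congrArg (fun L => L (0, v)) (h2.unique (hasFDerivAt_const (0 : ℂ) (z, p)))
    simp only [ContinuousLinearMap.comp_apply, ContinuousLinearMap.prod_apply,
      ContinuousLinearMap.coe_fst', ContinuousLinearMap.coe_snd', hv,
      zero_apply] at h3
    have h4 : ((0 : E), fderiv ℂ q (z, p) (0, v), (0 : G)) =
        fderiv ℂ q (z, p) (0, v) • ((0 : E), (1 : ℂ), (0 : G)) := by simp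
    rwa [h4, map_smul, smul_eq_mul] at h3

theorem eventually_zero_of_degenerate [CompleteSpace E] [CompleteSpace F] [CompleteSpace G]
    {q : E × F → ℂ} (hq : AnalyticAt ℂ q 0) (hq0 : q 0 = 0)
    {h : F → G} (hh : AnalyticAt ℂ h 0) (h0 : h 0 = 0)
    (hdeg : ∃ᶠ p₀ in 𝓝 (0 : F), ∀ᶠ p in 𝓝 p₀, ∃ v, fderiv ℂ h p v = 0 ∧
      ¬ ∀ᶠ z in 𝓝 (0 : E), fderiv ℂ q (z, p) (0, v) = 0)
    {Ψ : E × ℂ × G → ℂ} (hΨ : AnalyticAt ℂ Ψ 0)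
    (hz : ∀ᶠ x in 𝓝 (0 : E × F), Ψ (x.1, q x, h x.2) = 0) :
    ∀ᶠ y in 𝓝 (0 : E × ℂ × F), Ψ (y.1, y.2.1, h y.2.2) = 0 := by
  set D : (E × ℂ × G → ℂ) → E × ℂ × G → ℂ := fun K y => fderiv ℂ K y (0, 1, 0) with hDdef
  have hiter : ∀ k, AnalyticAt ℂ (D^[k] Ψ) 0 ∧
      ∀ᶠ x in 𝓝 (0 : E × F), (D^[k] Ψ) (x.1, q x, h x.2) = 0 := by
    intro k
    induction k with
    | zero => exact ⟨hΨ, hz⟩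
    | succ k ih =>
      rw [Function.iterate_succ_apply']
      exact ⟨analyticAt_fderiv_apply ih.1 _,
        fderiv_eq_zero_of_degenerate hq hq0 hh h0 hdeg ih.1 ih.2⟩
  obtain ⟨r, hr, hball⟩ := Metric.eventually_nhds_iff_ball.1 hΨ.eventually_analyticAt
  have hDan : ∀ K : E × ℂ × G → ℂ, AnalyticOnNhd ℂ K (Metric.ball 0 r) →
      AnalyticOnNhd ℂ (D K) (Metric.ball 0 r) ∧
        ∀ x ∈ Metric.ball 0 r, D K x = fderiv ℂ K x (0, 1, 0) :=
    fun K hK => ⟨fun x hx => analyticAt_fderiv_apply (hK x hx) _, fun _ _ => rfl⟩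
  have hDk : ∀ k, AnalyticOnNhd ℂ (D^[k] Ψ) (Metric.ball 0 r) := by
    intro k
    induction k with
    | zero => exact hball
    | succ k ih => rw [Function.iterate_succ_apply']; exact (hDan _ ih).1
  have hh' : AnalyticAt ℂ h (0 : E × F).2 := hh
  have hγ : AnalyticAt ℂ (fun x : E × F => (x.1, q x, h x.2)) 0 :=
    analyticAt_fst.prod (hq.prod (hh'.comp analyticAt_snd))
  have hγ0 : (fun x : E × F => (x.1, q x, h x.2)) 0 = 0 := by simp [hq0, h0]
  have hin : ∀ᶠ x in 𝓝 (0 : E × F), (x.1, q x, h x.2) ∈ Metric.ball (0 : E × ℂ × G) r :=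
    hγ.continuousAt.eventually (by rw [hγ0]; exact Metric.ball_mem_nhds _ hr)
  obtain ⟨s, hs, hsball⟩ := Metric.eventually_nhds_iff_ball.1
    (hγ.eventually_analyticAt.and hin)
  have hvan : ∀ k, ∀ x ∈ Metric.ball (0 : E × F) s, (D^[k] Ψ) (x.1, q x, h x.2) = 0 := by
    intro k
    exact AnalyticOnNhd.eqOn_zero_of_preconnected_of_eventuallyEq_zero
      (f := fun x : E × F => (D^[k] Ψ) (x.1, q x, h x.2))
      (fun x hx => (hDk k _ (hsball x hx).2).comp (f := fun x : E × F => (x.1, q x, h x.2))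
        (hsball x hx).1)
      (convex_ball _ s).isPreconnected (Metric.mem_ball_self hs) (hiter k).2
  have hc1 : Continuous fun y : E × ℂ × F => (y.1, y.2.2) := by fun_prop
  have hc2 : ContinuousAt (fun y : E × ℂ × F => (y.1, y.2.1, h y.2.2)) 0 := by
    have : ContinuousAt h (0 : E × ℂ × F).2.2 := hh.continuousAt
    have h5 : ContinuousAt (fun y : E × ℂ × F => h y.2.2) 0 :=
      this.comp (f := fun y : E × ℂ × F => y.2.2) (by fun_prop)
    fun_prop
  have e1 : ∀ᶠ y in 𝓝 (0 : E × ℂ × F), (y.1, y.2.2) ∈ Metric.ball (0 : E × F) s :=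
    hc1.tendsto' 0 0 rfl |>.eventually (Metric.ball_mem_nhds _ hs)
  have e2 : ∀ᶠ y in 𝓝 (0 : E × ℂ × F), (y.1, y.2.1, h y.2.2) ∈ Metric.ball (0 : E × ℂ × G) r :=
    hc2.eventually (by
      show Metric.ball (0 : E × ℂ × G) r ∈ 𝓝 ((0 : E), (0 : ℂ), h 0)
      rw [h0]; exact Metric.ball_mem_nhds (0 : E × ℂ × G) hr)
  filter_upwards [e1, e2] with y hy1 hy2
  have heq : (y.1, q (y.1, y.2.2), h y.2.2) + (y.2.1 - q (y.1, y.2.2)) • ((0 : E), (1 : ℂ), (0 : G))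
      = (y.1, y.2.1, h y.2.2) := by simp
  rw [← heq]
  exact eq_zero_on_line_of_iterated_fderiv_eq_zero Metric.isOpen_ball (convex_ball _ r) D _ hDan
    hball (hsball _ hy1).2 (fun k => hvan k _ hy1) (by rw [heq]; exact hy2)

/-- The graphs `w = q (z, p)` move to first order at `p` in every direction. -/
def Separating (q : E × F → ℂ) (p : F) : Prop :=
  ∀ v : F, (∀ᶠ z in 𝓝 (0 : E), fderiv ℂ q (z, p) (0, v) = 0) → v = 0

theorem eventually_separating [FiniteDimensional ℂ F] {q : E × F → ℂ} (hq : AnalyticAt ℂ q 0) :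
    ∀ᶠ p₀ in 𝓝 (0 : F), Separating q p₀ → ∀ᶠ p in 𝓝 p₀, Separating q p := by
  obtain ⟨r, hr, hball⟩ := Metric.eventually_nhds_iff_ball.1 hq.eventually_analyticAt
  have hmem : ∀ z ∈ Metric.ball (0 : E) r, ∀ p ∈ Metric.ball (0 : F) r,
      (z, p) ∈ Metric.ball (0 : E × F) r := fun z hz p hp => by
    rw [show (0 : E × F) = (0, 0) from rfl, ← ball_prod_same]; exact ⟨hz, hp⟩
  filter_upwards [Metric.ball_mem_nhds (0 : F) hr] with p₀ hp₀ hsep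
  have : ProperSpace F := FiniteDimensional.proper ℂ F
  have hloc : ∀ᶠ p in 𝓝 p₀, ∀ v ∈ Metric.sphere (0 : F) 1,
      ∃ z ∈ Metric.ball (0 : E) r, fderiv ℂ q (z, p) (0, v) ≠ 0 := by
    refine (isCompact_sphere (0 : F) 1).eventually_forall_of_forall_eventually fun v hv => ?_
    have hv0 : v ≠ 0 := fun h => by simp [h] at hv
    obtain ⟨z, hz, hzr⟩ := ((Filter.not_eventually.1 (mt (hsep v) hv0)).and_eventually
      (Metric.ball_mem_nhds (0 : E) hr)).exists
    have hc : ContinuousAt (fun x : F × F => fderiv ℂ q (z, x.1) (0, x.2)) (p₀, v) := by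
      have h1 : ContinuousAt (fderiv ℂ q) (z, (p₀, v).1) :=
        (hball _ (hmem z hzr p₀ hp₀)).fderiv.continuousAt
      have h2 : ContinuousAt (fun x : F × F => fderiv ℂ q (z, x.1)) (p₀, v) :=
        h1.comp (f := fun x : F × F => (z, x.1)) (by fun_prop)
      exact h2.clm_apply (by fun_prop)
    filter_upwards [hc.eventually_ne hz] with x hx using ⟨z, hzr, hx⟩
  filter_upwards [hloc, Metric.isOpen_ball.mem_nhds hp₀] with p hp hpr v hv
  by_contra hv0
  have hn : ‖v‖ ≠ 0 := norm_ne_zero_iff.2 hv0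
  obtain ⟨z, hz, hne⟩ := hp (((‖v‖⁻¹ : ℝ) : ℂ) • v) (by
    simp [norm_smul, hn])
  have hzero := AnalyticOnNhd.eqOn_zero_of_preconnected_of_eventuallyEq_zero
    (f := fun z => fderiv ℂ q (z, p) (0, v)) (U := Metric.ball (0 : E) r)
    (fun z hz => (analyticAt_fderiv_apply (hball _ (hmem z hz p hpr)) _).comp
      (f := fun z => (z, p)) (by fun_prop))
    (convex_ball _ r).isPreconnected (Metric.mem_ball_self hr) hv hz
  apply hne
  have : ((0 : E), ((‖v‖⁻¹ : ℝ) : ℂ) • v) = ((‖v‖⁻¹ : ℝ) : ℂ) • ((0 : E), v) := by simp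
  rw [this, map_smul]
  simp only [hzero, Pi.zero_apply, smul_zero]

end Degenerate

section MultiIndex

theorem foldr_comp_induction {X : Type*} (P : (X → X) → Prop) (hid : P id)
    (hcomp : ∀ a b, P a → P b → P (a ∘ b)) :
    ∀ L : List (X → X), (∀ a ∈ L, P a) → P (L.foldr (· ∘ ·) id)
  | [], _ => hid
  | a :: L, h => by
      have hL := foldr_comp_induction P hid hcomp L fun b hb => h b (by simp [hb])
      exact hcomp a (L.foldr (· ∘ ·) id) (h a (by simp)) hL

theorem mpd_induction (P : (((Fin n → ℂ) → ℂ) → (Fin n → ℂ) → ℂ) → Prop) (hid : P id)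
    (hpd : ∀ i, P (pd i)) (hcomp : ∀ a b, P a → P b → P (a ∘ b)) (α : Fin n → ℕ) :
    P (mpd α) := by
  refine foldr_comp_induction P hid hcomp _ fun a ha => ?_
  obtain ⟨i, rfl⟩ := List.mem_ofFn.1 ha
  induction α i with
  | zero => exact hid
  | succ k ih => rw [Function.iterate_succ]; exact hcomp _ _ ih (hpd i)

theorem mpd_congr (α : Fin n → ℕ) : ∀ (f g : (Fin n → ℂ) → ℂ) (x : Fin n → ℂ),
    f =ᶠ[𝓝 x] g → mpd α f =ᶠ[𝓝 x] mpd α g := by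
  refine mpd_induction (fun op => ∀ (f g : (Fin n → ℂ) → ℂ) (x : Fin n → ℂ),
    f =ᶠ[𝓝 x] g → op f =ᶠ[𝓝 x] op g) (fun _ _ _ h => h) ?_ ?_ α
  · intro i f g x h
    exact (h.fderiv (𝕜 := ℂ)).mono fun y hy => by simp only [pd]; rw [hy]
  · intro a b ha hb f g x h
    exact ha _ _ _ (hb _ _ _ h)

theorem mpd_zero (α : Fin n → ℕ) : mpd α (fun _ => 0) = fun _ => 0 := by
  refine mpd_induction (fun op => op (fun _ => 0) = fun _ => 0) rfl ?_ ?_ α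
  · intro i; funext z; simp [pd]
  · intro a b ha hb; rw [Function.comp_apply, hb, ha]

variable {F : Type*} [NormedAddCommGroup F] [NormedSpace ℂ F]

theorem fderiv_slice_left {E : Type*} [NormedAddCommGroup E] [NormedSpace ℂ E] {q : E × F → ℂ}
    {x : E × F} (h : DifferentiableAt ℂ q x) (e : E) :
    fderiv ℂ (fun z => q (z, x.2)) x.1 e = fderiv ℂ q x (e, 0) := by
  have h1 : HasFDerivAt (fun z : E => (z, x.2)) (ContinuousLinearMap.inl ℂ E F) x.1 :=
    hasFDerivAt_prodMk_left x.1 x.2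
  have := (HasFDerivAt.comp (f := fun z : E => (z, x.2)) x.1 h.hasFDerivAt h1).fderiv
  rw [Function.comp_def] at this
  rw [this]; simp

theorem fderiv_slice_right {E : Type*} [NormedAddCommGroup E] [NormedSpace ℂ E] {q : E × F → ℂ}
    {x : E × F} (h : DifferentiableAt ℂ q x) (v : F) :
    fderiv ℂ (fun y => q (x.1, y)) x.2 v = fderiv ℂ q x (0, v) := by
  have h1 : HasFDerivAt (fun y : F => (x.1, y)) (ContinuousLinearMap.inr ℂ E F) x.2 :=
    hasFDerivAt_prodMk_right x.1 x.2
  have := (HasFDerivAt.comp (f := fun y : F => (x.1, y)) x.2 h.hasFDerivAt h1).fderiv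
  rw [Function.comp_def] at this
  rw [this]; simp

theorem fderiv_fderiv_apply_comm {E : Type*} [NormedAddCommGroup E] [NormedSpace ℂ E] {q : E → ℂ}
    {x : E} (h : AnalyticAt ℂ q x) (u v : E) :
    fderiv ℂ (fun y => fderiv ℂ q y u) x v = fderiv ℂ (fun y => fderiv ℂ q y v) x u := by
  have hd : DifferentiableAt ℂ (fderiv ℂ q) x := h.fderiv.differentiableAt
  have h1 : ∀ u v, fderiv ℂ (fun y => fderiv ℂ q y u) x v = fderiv ℂ (fderiv ℂ q) x v u := by
    intro u v
    rw [fderiv_clm_apply hd (by fun_prop)]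
    simp
  rw [h1, h1, h.contDiffAt.isSymmSndFDerivAt_of_omega.eq]

theorem eventually_slice {E F : Type*} [TopologicalSpace E] [TopologicalSpace F]
    {U : Set (E × F)} (hU : IsOpen U)
    {x : E × F} (hx : x ∈ U) : ∀ᶠ z in 𝓝 x.1, (z, x.2) ∈ U := by
  have hc : Continuous fun z : E => (z, x.2) := by fun_prop
  exact hc.continuousAt.eventually (hU.mem_nhds hx)

/-- Iterated partial derivatives of slices of an analytic function are slices of an analytic
function, and they commute with derivatives in the parameter. -/
theorem exists_mpd_slice {U : Set ((Fin n → ℂ) × F)} (hU : IsOpen U)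
    {q : (Fin n → ℂ) × F → ℂ} (hq : AnalyticOnNhd ℂ q U) (α : Fin n → ℕ) :
    ∃ G : (Fin n → ℂ) × F → ℂ, AnalyticOnNhd ℂ G U ∧
      (∀ x ∈ U, mpd α (fun z => q (z, x.2)) x.1 = G x) ∧
      ∀ v, ∀ x ∈ U, mpd α (fun z => fderiv ℂ q (z, x.2) (0, v)) x.1 = fderiv ℂ G x (0, v) := by
  have key := mpd_induction (fun op => ∀ q : (Fin n → ℂ) × F → ℂ, AnalyticOnNhd ℂ q U →
    ∃ G : (Fin n → ℂ) × F → ℂ, AnalyticOnNhd ℂ G U ∧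
      (∀ W : F → (Fin n → ℂ) → ℂ, (∀ x ∈ U, W x.2 x.1 = q x) →
        ∀ x ∈ U, op (W x.2) x.1 = G x) ∧
      ∀ v, ∀ W : F → (Fin n → ℂ) → ℂ, (∀ x ∈ U, W x.2 x.1 = fderiv ℂ q x (0, v)) →
        ∀ x ∈ U, op (W x.2) x.1 = fderiv ℂ G x (0, v)) ?_ ?_ ?_ α q hq
  · obtain ⟨G, hG, h1, h2⟩ := key
    exact ⟨G, hG, h1 (fun y z => q (z, y)) fun _ _ => rfl,
      fun v => h2 v (fun y z => fderiv ℂ q (z, y) (0, v)) fun _ _ => rfl⟩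
  · exact fun q hq => ⟨q, hq, fun W h => h, fun v W h => h⟩
  · intro i q hq
    have hpd : ∀ q : (Fin n → ℂ) × F → ℂ, AnalyticOnNhd ℂ q U → ∀ W : F → (Fin n → ℂ) → ℂ,
        (∀ x ∈ U, W x.2 x.1 = q x) →
          ∀ x ∈ U, pd i (W x.2) x.1 = fderiv ℂ q x (Pi.single i 1, 0) := by
      intro q hq W hW x hx
      have : W x.2 =ᶠ[𝓝 x.1] fun z => q (z, x.2) :=
        (eventually_slice hU hx).mono fun z hz => hW _ hz
      rw [pd, this.fderiv_eq, fderiv_slice_left (hq x hx).differentiableAt]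
    refine ⟨fun x => fderiv ℂ q x (Pi.single i 1, 0),
      fun x hx => analyticAt_fderiv_apply (hq x hx) _, hpd q hq, fun v W hW x hx => ?_⟩
    rw [hpd (fun x => fderiv ℂ q x (0, v)) (fun x hx => analyticAt_fderiv_apply (hq x hx) _)
      W hW x hx, fderiv_fderiv_apply_comm (hq x hx)]
  · intro a b ha hb q hq
    obtain ⟨G, hG, h1, h2⟩ := hb q hq
    obtain ⟨K, hK, h3, h4⟩ := ha G hG
    exact ⟨K, hK, fun W hW => h3 (fun y => b (W y)) (h1 W hW),
      fun v W hW => h4 v (fun y => b (W y)) (h2 v W hW)⟩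

/-- An analytic function all of whose iterated partial derivatives vanish at `0` is zero. -/
theorem eventually_zero_of_mpd_eq_zero {H : (Fin n → ℂ) → ℂ} (hH : AnalyticAt ℂ H 0)
    (h : ∀ α, mpd α H 0 = 0) : ∀ᶠ z in 𝓝 0, H z = 0 := by
  obtain ⟨r, hr, hball⟩ := Metric.eventually_nhds_iff_ball.1 hH.eventually_analyticAt
  have hpd : ∀ i : Fin n, ∀ K : (Fin n → ℂ) → ℂ, AnalyticOnNhd ℂ K (Metric.ball 0 r) →
      AnalyticOnNhd ℂ (pd i K) (Metric.ball 0 r) ∧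
        ∀ x ∈ Metric.ball 0 r, pd i K x = fderiv ℂ K x (Pi.single i 1) :=
    fun i K hK => ⟨fun x hx => analyticAt_fderiv_apply (hK x hx) _, fun _ _ => rfl⟩
  set L : (Fin n → ℕ) → List ((((Fin n → ℂ) → ℂ)) → (Fin n → ℂ) → ℂ) :=
    fun α => List.ofFn fun i : Fin n => (pd i)^[α i] with hL
  have key : ∀ m ≤ n, ∀ α : Fin n → ℕ, ∀ z ∈ Metric.ball (0 : Fin n → ℂ) r,
      (∀ i : Fin n, m ≤ i → z i = 0) → (((L α).drop m).foldr (· ∘ ·) id) H z = 0 := by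
    intro m
    induction m with
    | zero =>
      intro _ α z _ hz
      obtain rfl : z = 0 := funext fun i => hz i (Nat.zero_le _)
      exact h α
    | succ m ih =>
      intro hm α z hz hz0
      have hmn : m < n := hm
      set i : Fin n := ⟨m, hmn⟩ with hi
      set K := (((L α).drop (m + 1)).foldr (· ∘ ·) id) H with hK
      have hKan : AnalyticOnNhd ℂ K (Metric.ball 0 r) := by
        refine foldr_comp_induction (fun op => ∀ G : (Fin n → ℂ) → ℂ,
          AnalyticOnNhd ℂ G (Metric.ball 0 r) → AnalyticOnNhd ℂ (op G) (Metric.ball 0 r))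
          (fun _ h => h) (fun a b ha hb G hG => ha _ (hb _ hG)) _ ?_ H hball
        intro a ha
        obtain ⟨j, rfl⟩ := List.mem_ofFn.1 (List.mem_of_mem_drop ha)
        intro G hG
        induction α j with
        | zero => exact hG
        | succ k ih => rw [Function.iterate_succ_apply']; exact (hpd j _ ih).1
      set z' : Fin n → ℂ := Function.update z i 0 with hz'
      have hz'b : z' ∈ Metric.ball (0 : Fin n → ℂ) r := by
        rw [mem_ball_zero_iff, pi_norm_lt_iff hr] at hz ⊢
        intro j
        by_cases hj : j = i
        · subst hj; simp [hz', hr]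
        · simpa [hz', hj] using hz j
      have heq : z' + z i • (Pi.single i 1 : Fin n → ℂ) = z := by
        funext j
        by_cases hj : j = i
        · subst hj; simp [hz']
        · simp [hz', hj]
      rw [← heq]
      refine eq_zero_on_line_of_iterated_fderiv_eq_zero Metric.isOpen_ball (convex_ball _ r)
        (pd i) _ (hpd i) hKan hz'b (fun k => ?_) (by rwa [heq])
      have h1 := ih hmn.le (Function.update α i k) z' hz'b (fun j hj => by
        by_cases hji : j = i
        · subst hji; simp [hz']
        · rw [hz', Function.update_of_ne hji]
          refine hz0 j (lt_of_le_of_ne hj fun h => hji (Fin.ext h.symm)))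
      have hlen : ∀ β, (L β).length = n := fun β => by simp [hL]
      rw [List.drop_eq_getElem_cons (by rw [hlen]; exact hmn)] at h1
      have h2 : (L (Function.update α i k)).drop (m + 1) = (L α).drop (m + 1) := by
        refine List.ext_getElem (by simp [hlen]) fun l h3 h4 => ?_
        simp only [hL, List.getElem_drop, List.getElem_ofFn]
        rw [Function.update_of_ne]
        intro h5
        have := congrArg Fin.val h5
        simp only [hi] at this
        omega
      rw [h2] at h1
      simpa [hL, ← hi, ← hK] using h1
  filter_upwards [Metric.ball_mem_nhds (0 : Fin n → ℂ) hr] with z hz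
  have := key n le_rfl 0 z hz (fun i hi => absurd i.2 (not_lt.2 hi))
  rwa [List.drop_of_length_le (by simp [hL])] at this

theorem exists_vec_of_det_eq_zero {ι : Type*} (R : ι → Fin n → ℂ)
    (h : ∀ A : Fin n → ι, (Matrix.of fun j k => R (A j) k).det = 0) :
    ∃ v : Fin n → ℂ, v ≠ 0 ∧ ∀ a, ∑ k, v k * R a k = 0 := by
  have hlt : Submodule.span ℂ (Set.range R) < ⊤ := by
    refine lt_top_iff_ne_top.2 fun htop => ?_
    obtain ⟨f, hf, -, hli⟩ := Submodule.exists_fun_fin_finrank_span_eq ℂ (Set.range R)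
    have hfr : Module.finrank ℂ (Submodule.span ℂ (Set.range R)) = n := by
      rw [htop, finrank_top]; simp
    choose a ha using hf
    have hli' := hli.comp _ (finCongr hfr.symm).injective
    have hM := h (fun j => a (finCongr hfr.symm j))
    have hunit := (Matrix.linearIndependent_rows_iff_isUnit
      (A := Matrix.of fun j k => R (a (finCongr hfr.symm j)) k)).1 (by
        have hrow : (fun j => R (a (finCongr hfr.symm j))) = f ∘ finCongr hfr.symm :=
          funext fun j => ha _
        exact hrow ▸ hli')
    exact ((Matrix.isUnit_iff_isUnit_det _).1 hunit).ne_zero hM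
  obtain ⟨φ, hφ, hker⟩ := Submodule.exists_le_ker_of_lt_top _ hlt
  refine ⟨fun k => φ (Pi.single k 1), fun h0 => hφ ?_, fun a => ?_⟩
  · refine (Pi.basisFun ℂ (Fin n)).ext fun k => ?_
    simpa using congrFun h0 k
  · have h1 : φ (R a) = 0 := hker (Submodule.subset_span ⟨a, rfl⟩)
    rw [← h1]
    conv_rhs => rw [pi_eq_sum_univ (R a), map_sum]
    refine Finset.sum_congr rfl fun k _ => ?_
    rw [map_smul, smul_eq_mul, mul_comm]
    congr 1
    refine congrArg φ (funext fun j => ?_)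
    simp [Pi.single_apply, eq_comm]

theorem fderiv_apply_eq_sum {E : Type*} [NormedAddCommGroup E] [NormedSpace ℂ E]
    (L : E × (Fin n → ℂ) →L[ℂ] ℂ) (v : Fin n → ℂ) :
    L (0, v) = ∑ k, v k * L (0, Pi.single k 1) := by
  have h := (L.comp (ContinuousLinearMap.inr ℂ E (Fin n → ℂ))).toLinearMap.pi_apply_eq_sum_univ v
  simp only [ContinuousLinearMap.coe_coe, ContinuousLinearMap.comp_apply,
    ContinuousLinearMap.inr_apply, smul_eq_mul] at h
  rw [h]
  refine Finset.sum_congr rfl fun k _ => ?_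
  congr 3
  funext j
  simp [Pi.single_apply, eq_comm]

theorem exists_classC_entries {Q : (Fin n → ℂ) → (Fin n → ℂ) → ℂ → ℂ}
    (hq : AnalyticAt ℂ (fun x : (Fin n → ℂ) × (Fin n → ℂ) => Q x.1 x.2 0) 0) :
    ∃ r > 0, ∃ G : (Fin n → ℕ) → (Fin n → ℂ) × (Fin n → ℂ) → ℂ,
      (∀ α, AnalyticOnNhd ℂ (G α) (Metric.ball 0 r)) ∧
      AnalyticOnNhd ℂ (fun x : (Fin n → ℂ) × (Fin n → ℂ) => Q x.1 x.2 0) (Metric.ball 0 r) ∧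
      (∀ α k, ∀ χ ∈ Metric.ball (0 : Fin n → ℂ) r,
        pd k (fun χ' => mpd α (fun z => Q z χ' 0) 0) χ =
          fderiv ℂ (G α) (0, χ) (0, Pi.single k 1)) ∧
      ∀ α v, ∀ χ ∈ Metric.ball (0 : Fin n → ℂ) r,
        mpd α (fun z => fderiv ℂ (fun x : (Fin n → ℂ) × (Fin n → ℂ) => Q x.1 x.2 0) (z, χ) (0, v))
          0 = ∑ k, v k * fderiv ℂ (G α) (0, χ) (0, Pi.single k 1) := by
  obtain ⟨r, hr, hball⟩ := Metric.eventually_nhds_iff_ball.1 hq.eventually_analyticAt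
  choose G hG h1 h2 using fun α => exists_mpd_slice Metric.isOpen_ball hball α
  have hmem : ∀ χ ∈ Metric.ball (0 : Fin n → ℂ) r,
      ((0 : Fin n → ℂ), χ) ∈ Metric.ball (0 : (Fin n → ℂ) × (Fin n → ℂ)) r := fun χ hχ => by
    rw [show (0 : (Fin n → ℂ) × (Fin n → ℂ)) = (0, 0) from rfl, ← ball_prod_same]
    exact ⟨Metric.mem_ball_self hr, hχ⟩
  refine ⟨r, hr, G, hG, hball, fun α k χ hχ => ?_, fun α v χ hχ => ?_⟩
  · have : (fun χ' => mpd α (fun z => Q z χ' 0) 0) =ᶠ[𝓝 χ] fun χ' => G α (0, χ') := by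
      filter_upwards [Metric.isOpen_ball.mem_nhds hχ] with χ' hχ'
      exact h1 α _ (hmem χ' hχ')
    rw [pd, this.fderiv_eq]
    exact fderiv_slice_right (x := (0, χ)) (hG α _ (hmem χ hχ)).differentiableAt _
  · rw [← fderiv_apply_eq_sum]
    exact h2 α v _ (hmem χ hχ)

theorem ClassC.frequently_separating {Q : (Fin n → ℂ) → (Fin n → ℂ) → ℂ → ℂ} (hQ : ClassC Q)
    (hq : AnalyticAt ℂ (fun x : (Fin n → ℂ) × (Fin n → ℂ) => Q x.1 x.2 0) 0) :
    ∃ᶠ χ in 𝓝 (0 : Fin n → ℂ),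
      Separating (fun x : (Fin n → ℂ) × (Fin n → ℂ) => Q x.1 x.2 0) χ := by
  obtain ⟨r, hr, G, -, -, h1, h2⟩ := exists_classC_entries hq
  obtain ⟨-, A, -, hdet⟩ := hQ
  refine ((Filter.not_eventually.1 hdet).and_eventually (Metric.ball_mem_nhds _ hr)).mono ?_
  rintro χ ⟨hχ, hχr⟩ v hv
  by_contra hv0
  refine hχ (Matrix.exists_mulVec_eq_zero_iff.1 ⟨v, hv0, funext fun j => ?_⟩)
  have h3 : mpd (A j) (fun z => fderiv ℂ (fun x : (Fin n → ℂ) × (Fin n → ℂ) => Q x.1 x.2 0)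
      (z, χ) (0, v)) 0 = 0 := by
    rw [(mpd_congr (A j) _ (fun _ => 0) 0 hv).self_of_nhds, mpd_zero]
  rw [h2 _ _ _ hχr] at h3
  simp only [Matrix.mulVec, dotProduct, Matrix.of_apply, Pi.zero_apply, h1 _ _ _ hχr]
  rw [← h3]
  exact Finset.sum_congr rfl fun k _ => mul_comm _ _

theorem classC_of_frequently_separating {Q : (Fin n → ℂ) → (Fin n → ℂ) → ℂ → ℂ}
    (hq : AnalyticAt ℂ (fun x : (Fin n → ℂ) × (Fin n → ℂ) => Q x.1 x.2 0) 0)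
    (hsep : ∃ᶠ χ in 𝓝 (0 : Fin n → ℂ),
      Separating (fun x : (Fin n → ℂ) × (Fin n → ℂ) => Q x.1 x.2 0) χ) : ClassC Q := by
  by_contra hC
  obtain ⟨r, hr, G, hG, hqan, h1, h2⟩ := exists_classC_entries hq
  have hc : ∀ χ : Fin n → ℂ, AnalyticAt ℂ (fun χ' : Fin n → ℂ => ((0 : Fin n → ℂ), χ')) χ :=
    fun χ => by fun_prop
  have hmem : ∀ χ ∈ Metric.ball (0 : Fin n → ℂ) r,
      ((0 : Fin n → ℂ), χ) ∈ Metric.ball (0 : (Fin n → ℂ) × (Fin n → ℂ)) r := fun χ hχ => by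
    rw [show (0 : (Fin n → ℂ) × (Fin n → ℂ)) = (0, 0) from rfl, ← ball_prod_same]
    exact ⟨Metric.mem_ball_self hr, hχ⟩
  have hdet : ∀ A : Fin n → Fin n → ℕ, ∀ χ ∈ Metric.ball (0 : Fin n → ℂ) r,
      (Matrix.of fun j k : Fin n => fderiv ℂ (G (A j)) (0, χ) (0, Pi.single k 1)).det = 0 := by
    intro A
    have hev : ∀ᶠ χ in 𝓝 (0 : Fin n → ℂ), (Matrix.of fun j k : Fin n =>
        fderiv ℂ (G (A j)) (0, χ) (0, Pi.single k 1)).det = 0 := by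
      by_contra hne
      refine hC ⟨∑ j, ∑ i, A j i, A, fun j => Finset.single_le_sum
        (f := fun j => ∑ i, A j i) (fun _ _ => Nat.zero_le _) (Finset.mem_univ j),
        fun h => hne ?_⟩
      filter_upwards [h, Metric.ball_mem_nhds (0 : Fin n → ℂ) hr] with χ hχ hχr
      simpa only [h1 _ _ _ hχr] using hχ
    refine AnalyticOnNhd.eqOn_zero_of_preconnected_of_eventuallyEq_zero (𝕜 := ℂ)
      (f := fun χ : Fin n → ℂ => (Matrix.of fun j k : Fin n =>
        fderiv ℂ (G (A j)) (0, χ) (0, Pi.single k 1)).det) (fun χ hχ => ?_)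
      (convex_ball _ r).isPreconnected (Metric.mem_ball_self hr) hev
    simp only [Matrix.det_apply, Matrix.of_apply]
    refine Finset.analyticAt_fun_sum _ fun σ _ => AnalyticAt.const_smul
      (Finset.analyticAt_fun_prod _ fun j _ => ?_)
    exact (analyticAt_fderiv_apply (hG (A (σ j)) _ (hmem χ hχ)) _).comp (hc χ)
  obtain ⟨χ, hχ, hχr⟩ := (hsep.and_eventually (Metric.ball_mem_nhds _ hr)).exists
  obtain ⟨v, hv0, hv⟩ := exists_vec_of_det_eq_zero
    (fun α k => fderiv ℂ (G α) (0, χ) (0, Pi.single k 1)) fun A => hdet A χ hχr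
  refine hv0 (hχ v (eventually_zero_of_mpd_eq_zero ?_ fun α => ?_))
  · exact (analyticAt_fderiv_apply (hqan _ (hmem χ hχr)) _).comp
      (f := fun z : Fin n → ℂ => (z, χ)) (by fun_prop)
  · rw [h2 α v χ hχr, hv]

end MultiIndex

section SegrePair

variable {E : Type*} [NormedAddCommGroup E] [NormedSpace ℂ E]

/-- The two defining functions `w = Q(z,χ,τ)` and `τ = P(χ,z,w)` of one complexified hypersurface,
in normal coordinates. -/
structure SegrePair (Q P : E → E → ℂ → ℂ) : Prop where
  analytic : AnalyticAt ℂ (fun x : E × E × ℂ => Q x.1 x.2.1 x.2.2) 0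
  analytic' : AnalyticAt ℂ (fun x : E × E × ℂ => P x.1 x.2.1 x.2.2) 0
  normal_left : ∀ᶠ x in 𝓝 (0 : E × ℂ), Q 0 x.1 x.2 = x.2
  normal_right : ∀ᶠ x in 𝓝 (0 : E × ℂ), Q x.1 0 x.2 = x.2
  normal_left' : ∀ᶠ x in 𝓝 (0 : E × ℂ), P 0 x.1 x.2 = x.2
  normal_right' : ∀ᶠ x in 𝓝 (0 : E × ℂ), P x.1 0 x.2 = x.2
  comp : ∀ᶠ x in 𝓝 (0 : E × E × ℂ), Q x.1 x.2.1 (P x.2.1 x.1 x.2.2) = x.2.2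
  comp' : ∀ᶠ x in 𝓝 (0 : E × E × ℂ), P x.1 x.2.1 (Q x.2.1 x.1 x.2.2) = x.2.2

theorem SegrePair.symm {Q P : E → E → ℂ → ℂ} (h : SegrePair Q P) : SegrePair P Q :=
  ⟨h.analytic', h.analytic, h.normal_left', h.normal_right', h.normal_left, h.normal_right,
    h.comp', h.comp⟩

theorem SegrePair.apply_zero {Q P : E → E → ℂ → ℂ} (h : SegrePair Q P) : Q 0 0 0 = 0 :=
  h.normal_left.self_of_nhds

theorem hasFDerivAt_of_normal {Q : E → E → ℂ → ℂ}
    (hQ : AnalyticAt ℂ (fun x : E × E × ℂ => Q x.1 x.2.1 x.2.2) 0)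
    (h1 : ∀ᶠ x in 𝓝 (0 : E × ℂ), Q 0 x.1 x.2 = x.2)
    (h2 : ∀ᶠ x in 𝓝 (0 : E × ℂ), Q x.1 0 x.2 = x.2) :
    HasFDerivAt (fun x : E × E × ℂ => Q x.1 x.2.1 x.2.2)
      ((ContinuousLinearMap.snd ℂ E ℂ).comp (ContinuousLinearMap.snd ℂ E (E × ℂ))) 0 := by
  have hd := hQ.differentiableAt.hasFDerivAt
  have e1 : ∀ y, fderiv ℂ (fun x : E × E × ℂ => Q x.1 x.2.1 x.2.2) 0 (0, y) = y.2 := by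
    intro y
    rw [← fderiv_slice_right (x := (0 : E × E × ℂ)) hQ.differentiableAt y]
    have : (fun y : E × ℂ => Q 0 y.1 y.2) =ᶠ[𝓝 0] fun y => y.2 := h1
    have h3 := this.fderiv_eq (𝕜 := ℂ)
    have h4 : fderiv ℂ (fun y : E × ℂ => y.2) 0 = ContinuousLinearMap.snd ℂ E ℂ := fderiv_snd
    exact (DFunLike.congr_fun (h3.trans h4) y)
  have e2 : ∀ z, fderiv ℂ (fun x : E × E × ℂ => Q x.1 x.2.1 x.2.2) 0 (z, 0) = 0 := by
    intro z
    rw [← fderiv_slice_left (x := (0 : E × E × ℂ)) hQ.differentiableAt z]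
    have hc : Continuous fun z : E => (z, (0 : ℂ)) := by fun_prop
    have : (fun z : E => Q z 0 0) =ᶠ[𝓝 0] fun _ => 0 := hc.tendsto' 0 0 rfl |>.eventually h2
    have h3 := this.fderiv_eq (𝕜 := ℂ)
    rw [fderiv_fun_const] at h3
    exact DFunLike.congr_fun h3 z
  refine hd.congr_fderiv (ContinuousLinearMap.ext fun x => ?_)
  have h3 : x = (x.1, 0) + (0, x.2) := by simp
  rw [h3, map_add, e1, e2]
  simp

theorem SegrePair.of_continuousAt [CompleteSpace E] {Q P : E → E → ℂ → ℂ}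
    (hQ : AnalyticAt ℂ (fun x : E × E × ℂ => Q x.1 x.2.1 x.2.2) 0)
    (h1 : ∀ᶠ x in 𝓝 (0 : E × ℂ), Q 0 x.1 x.2 = x.2)
    (h2 : ∀ᶠ x in 𝓝 (0 : E × ℂ), Q x.1 0 x.2 = x.2)
    (hP : ContinuousAt (fun x : E × E × ℂ => P x.1 x.2.1 x.2.2) 0) (hP0 : P 0 0 0 = 0)
    (h : ∀ᶠ x in 𝓝 (0 : E × E × ℂ), Q x.1 x.2.1 (P x.2.1 x.1 x.2.2) = x.2.2) :
    SegrePair Q P := by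
  set G : E × E × ℂ → E × E × ℂ := fun x => (x.1, x.2.1, Q x.1 x.2.1 x.2.2) with hG
  have hQ0 : Q 0 0 0 = 0 := h1.self_of_nhds
  have hGan : AnalyticAt ℂ G 0 :=
    analyticAt_fst.prod ((analyticAt_fst.comp analyticAt_snd).prod hQ)
  have hG0 : G 0 = 0 := by simp [hG, hQ0]
  have hGd : HasFDerivAt G (ContinuousLinearEquiv.refl ℂ (E × E × ℂ) : E × E × ℂ →L[ℂ] E × E × ℂ)
      0 := by
    have := HasFDerivAt.prodMk (hasFDerivAt_fst (𝕜 := ℂ) (p := (0 : E × E × ℂ)))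
      ((HasFDerivAt.comp (0 : E × E × ℂ) (hasFDerivAt_fst (𝕜 := ℂ) (p := (0 : E × ℂ)))
        (hasFDerivAt_snd (𝕜 := ℂ) (p := (0 : E × E × ℂ)))).prodMk
        (hasFDerivAt_of_normal hQ h1 h2))
    exact this
  have hstrict : HasStrictFDerivAt G
      (ContinuousLinearEquiv.refl ℂ (E × E × ℂ) : E × E × ℂ →L[ℂ] E × E × ℂ) 0 := by
    have := hGan.hasStrictFDerivAt
    rwa [hGd.fderiv] at this
  set I := hstrict.localInverse G _ 0 with hI
  have hIan : AnalyticAt ℂ I 0 := by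
    have := (hstrict.toOpenPartialHomeomorph G).analyticAt_symm'
      hstrict.mem_toOpenPartialHomeomorph_source hGan hGd.fderiv
    rw [hstrict.toOpenPartialHomeomorph_coe, hG0] at this
    exact this
  have hIG : ∀ᶠ x in 𝓝 0, I (G x) = x := hstrict.eventually_left_inverse
  have hswap : ContinuousAt (fun x : E × E × ℂ => P x.2.1 x.1 x.2.2) 0 :=
    ContinuousAt.comp (f := fun x : E × E × ℂ => (x.2.1, x.1, x.2.2))
      (g := fun x : E × E × ℂ => P x.1 x.2.1 x.2.2) (x := 0) hP (by fun_prop)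
  have hIP : ∀ᶠ x in 𝓝 (0 : E × E × ℂ), I x = (x.1, x.2.1, P x.2.1 x.1 x.2.2) := by
    have hc : ContinuousAt (fun x : E × E × ℂ => (x.1, x.2.1, P x.2.1 x.1 x.2.2)) 0 := by
      fun_prop
    have hc' := hc.tendsto
    simp only [Prod.fst_zero, Prod.snd_zero, hP0] at hc'
    filter_upwards [hc'.eventually hIG, h] with x hx h
    simp only [hG, h] at hx
    exact hx
  have hPan : AnalyticAt ℂ (fun x : E × E × ℂ => P x.1 x.2.1 x.2.2) 0 := by
    have hsw : AnalyticAt ℂ (fun x : E × E × ℂ => (x.2.1, x.1, x.2.2)) 0 :=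
      (analyticAt_fst.comp analyticAt_snd).prod
        (analyticAt_fst.prod (analyticAt_snd.comp analyticAt_snd))
    have h4 : AnalyticAt ℂ (fun x : E × E × ℂ => (I (x.2.1, x.1, x.2.2)).2.2) 0 :=
      (analyticAt_snd.comp analyticAt_snd).comp
        (AnalyticAt.comp (g := I) (f := fun x : E × E × ℂ => (x.2.1, x.1, x.2.2)) hIan hsw)
    refine h4.congr ?_
    filter_upwards [hsw.continuousAt.tendsto.eventually hIP] with x hx
    rw [hx]
  have hPQ : ∀ᶠ x in 𝓝 (0 : E × E × ℂ), P x.1 x.2.1 (Q x.2.1 x.1 x.2.2) = x.2.2 := by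
    have hsw : ContinuousAt (fun x : E × E × ℂ => (x.2.1, x.1, x.2.2)) 0 := by fun_prop
    have h5 := hGan.continuousAt.tendsto
    rw [hG0] at h5
    have h6 := (h5.eventually hIP).and hIG
    filter_upwards [hsw.tendsto.eventually h6] with x hx
    have h7 := hx.1.symm.trans hx.2
    exact congrArg (fun y => y.2.2) h7
  refine ⟨hQ, hPan, h1, h2, ?_, ?_, h, hPQ⟩
  · have hc : Continuous fun x : E × ℂ => ((0 : E), x.1, x.2) := by fun_prop
    filter_upwards [hc.tendsto' 0 0 rfl |>.eventually hPQ, h2] with x hx h2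
    simpa only [h2] using hx
  · have hc : Continuous fun x : E × ℂ => (x.1, (0 : E), x.2) := by fun_prop
    filter_upwards [hc.tendsto' 0 0 rfl |>.eventually hPQ, h1] with x hx h1
    simpa only [h1] using hx

end SegrePair

section QBar

theorem IsRealNormalDF.segrePair {Q : (Fin n → ℂ) → (Fin n → ℂ) → ℂ → ℂ}
    (hQ : IsRealNormalDF Q) : SegrePair Q (QBar Q) := by
  obtain ⟨⟨han, hnorm⟩, hreal⟩ := hQ
  have hc : ∀ᶠ x in 𝓝 (0 : (Fin n → ℂ) × ℂ), Q 0 x.1 x.2 = x.2 := by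
    have hc : Continuous fun x : (Fin n → ℂ) × ℂ => ((0 : Fin n → ℂ), x.1, x.2) := by fun_prop
    exact (hc.tendsto' 0 0 rfl |>.eventually hnorm).mono fun x hx => hx.1
  refine SegrePair.of_continuousAt han.self_of_nhds hc ?_ ?_ ?_ hreal
  · have hc : Continuous fun x : (Fin n → ℂ) × ℂ => (x.1, (0 : Fin n → ℂ), x.2) := by fun_prop
    exact (hc.tendsto' 0 0 rfl |>.eventually hnorm).mono fun x hx => hx.2
  · have h1 : Continuous fun x : (Fin n → ℂ) × (Fin n → ℂ) × ℂ => star x := continuous_star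
    have h2 := han.self_of_nhds.continuousAt
    have h3 : ContinuousAt (fun x : (Fin n → ℂ) × (Fin n → ℂ) × ℂ =>
        Q (star x).1 (star x).2.1 (star x).2.2) 0 :=
      ContinuousAt.comp (f := fun x : (Fin n → ℂ) × (Fin n → ℂ) × ℂ => star x)
        (g := fun x : (Fin n → ℂ) × (Fin n → ℂ) × ℂ => Q x.1 x.2.1 x.2.2) (x := 0)
        (by rw [star_zero]; exact h2) h1.continuousAt
    exact continuous_star.continuousAt.comp h3
  · have h0 : Q 0 0 0 = 0 := hc.self_of_nhds
    have h1 : conjV (0 : Fin n → ℂ) = 0 := funext fun _ => by simp [conjV]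
    simp [QBar, h1, h0]

theorem separating_QBar {Q : (Fin n → ℂ) → (Fin n → ℂ) → ℂ → ℂ} {χ : Fin n → ℂ}
    (han : ∀ᶠ z in 𝓝 (0 : Fin n → ℂ),
      AnalyticAt ℂ (fun x : (Fin n → ℂ) × (Fin n → ℂ) => Q x.1 x.2 0) (z, χ))
    (h : Separating (fun x : (Fin n → ℂ) × (Fin n → ℂ) => Q x.1 x.2 0) χ) :
    Separating (fun x : (Fin n → ℂ) × (Fin n → ℂ) => QBar Q x.1 x.2 0) (star χ) := by
  intro v hv
  rw [← star_eq_zero]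
  refine h _ ?_
  have hstar : Tendsto (fun z : Fin n → ℂ => star z) (𝓝 0) (𝓝 0) :=
    continuous_star.tendsto' 0 0 (star_zero _)
  filter_upwards [han, hstar.eventually hv] with z hz hvz
  have h1 := hz.differentiableAt.hasFDerivAt.star_star.fderiv
  have h2 : (star ∘ (fun x : (Fin n → ℂ) × (Fin n → ℂ) => Q x.1 x.2 0) ∘ star) =
      fun x : (Fin n → ℂ) × (Fin n → ℂ) => QBar Q x.1 x.2 0 := by
    funext x
    simp only [Function.comp_apply, QBar, map_zero]
    rfl
  rw [h2] at h1
  have h3 : fderiv ℂ (fun x : (Fin n → ℂ) × (Fin n → ℂ) => QBar Q x.1 x.2 0) (star (z, χ)) (0, v)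
      = 0 := hvz
  rw [h1] at h3
  simpa [Prod.star_def] using h3

end QBar

section Cylinder

variable {X S : Type*} [NormedAddCommGroup X] [NormedSpace ℂ X]
  [NormedAddCommGroup S] [NormedSpace ℂ S]

/-- If the zero set of `U` lies over the zero set of a nontrivial function of the second variable,
then it contains with each point a neighborhood of this point in the fiber. -/
theorem eventually_zero_of_zero_subset_cylinder {U : X × S → ℂ} {K : S → ℂ} {x₀ : X} {s₀ : S}
    (hU : AnalyticAt ℂ U (x₀, s₀)) (hK : AnalyticAt ℂ K s₀) (hK0 : ¬ ∀ᶠ s in 𝓝 s₀, K s = 0)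
    (hUK : ∀ᶠ y in 𝓝 (x₀, s₀), U y = 0 → K y.2 = 0) (h0 : U (x₀, s₀) = 0) :
    ∀ᶠ x in 𝓝 x₀, U (x, s₀) = 0 := by
  obtain ⟨r, hr, hUan⟩ := Metric.eventually_nhds_iff_ball.1
    (hU.eventually_analyticAt.and hUK)
  obtain ⟨r', hr', hKan⟩ := Metric.eventually_nhds_iff_ball.1 hK.eventually_analyticAt
  obtain ⟨s₁, hs₁, hs₁r⟩ := ((Filter.not_eventually.1 hK0).and_eventually
    (Metric.ball_mem_nhds s₀ hr')).exists
  set e := s₁ - s₀ with he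
  set c : ℂ → S := fun t => s₀ + t • e with hc
  have hcan : ∀ t, AnalyticAt ℂ c t := fun t => by fun_prop
  have hcc : Continuous c := by fun_prop
  have hc0 : c 0 = s₀ := by simp [hc]
  have hc1 : c 1 = s₁ := by simp [hc, he]
  have hKc : ∀ᶠ t in 𝓝[≠] (0 : ℂ), K (c t) ≠ 0 := by
    have han0 : AnalyticAt ℂ (fun t => K (c t)) 0 := by
      have : AnalyticAt ℂ K (c 0) := by rwa [hc0]
      exact this.comp (hcan 0)
    refine han0.eventually_eq_zero_or_eventually_ne_zero.resolve_left fun hz => hs₁ ?_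
    have hconv : Convex ℝ (c ⁻¹' Metric.ball s₀ r') := by
      intro a ha b hb p q hp hq hpq
      have := convex_ball s₀ r' ha hb hp hq hpq
      show s₀ + (p • a + q • b) • e ∈ Metric.ball s₀ r'
      convert this using 1
      have h1 : s₀ = p • s₀ + q • s₀ := by rw [← add_smul, hpq, one_smul]
      conv_lhs => rw [h1]
      simp only [hc, smul_add, add_smul, smul_assoc]
      abel
    have := AnalyticOnNhd.eqOn_zero_of_preconnected_of_eventuallyEq_zero
      (f := fun t => K (c t)) (U := c ⁻¹' Metric.ball s₀ r')
      (fun t ht => (hKan _ ht).comp (hcan t)) hconv.isPreconnected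
      (by simpa [hc0] using hr') hz
    have h2 := this (x := 1) (by simpa [hc1] using hs₁r)
    simpa [hc1] using h2
  have hin : ∀ᶠ t in 𝓝 (0 : ℂ), c t ∈ Metric.ball s₀ r :=
    hcc.tendsto' 0 s₀ hc0 |>.eventually (Metric.ball_mem_nhds s₀ hr)
  obtain ⟨ρ, hρ, hball⟩ := Metric.eventually_nhds_iff_ball.1
    ((eventually_nhdsWithin_iff.1 hKc).and hin)
  set σ := ρ / 2 with hσ
  have hσ0 : 0 < σ := half_pos hρ
  have hσρ : Metric.closedBall (0 : ℂ) σ ⊆ Metric.ball 0 ρ :=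
    Metric.closedBall_subset_ball (half_lt_self hρ)
  have hmem : ∀ x ∈ Metric.ball x₀ r, ∀ t ∈ Metric.closedBall (0 : ℂ) σ,
      (x, c t) ∈ Metric.ball (x₀, s₀) r := fun x hx t ht => by
    rw [← ball_prod_same]; exact ⟨hx, (hball t (hσρ ht)).2⟩
  have hUt : ∀ x ∈ Metric.ball x₀ r, ∀ t ∈ Metric.closedBall (0 : ℂ) σ, t ≠ 0 →
      U (x, c t) ≠ 0 := fun x hx t ht ht0 hz =>
    (hball t (hσρ ht)).1 ht0 ((hUan _ (hmem x hx t ht)).2 hz)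
  have hsub : Metric.sphere (0 : ℂ) σ ⊆ Metric.closedBall 0 σ := Metric.sphere_subset_closedBall
  have hsne : ∀ t ∈ Metric.sphere (0 : ℂ) σ, t ≠ 0 := fun t ht h => by
    rw [h] at ht; simp at ht; exact hσ0.ne ht
  have hUcont : ∀ x ∈ Metric.ball x₀ r, ∀ t ∈ Metric.closedBall (0 : ℂ) σ,
      ContinuousAt (fun y : X × ℂ => U (y.1, c y.2)) (x, t) := fun x hx t ht =>
    ContinuousAt.comp (f := fun y : X × ℂ => (y.1, c y.2)) (g := U) (x := (x, t))
      (hUan _ (hmem x hx t ht)).1.continuousAt (by fun_prop)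
  have hx₀ : x₀ ∈ Metric.ball x₀ r := Metric.mem_ball_self hr
  obtain ⟨t₀, ht₀, hmin⟩ := (isCompact_sphere (0 : ℂ) σ).exists_isMinOn
    ⟨(σ : ℂ), by simp [abs_of_pos hσ0]⟩ (f := fun t => ‖U (x₀, c t)‖)
    (fun t ht => by
      have h1 := (hUcont x₀ hx₀ t (hsub ht)).comp (f := fun t : ℂ => (x₀, t)) (x := t)
        (by fun_prop)
      exact h1.norm.continuousWithinAt)
  set δ := ‖U (x₀, c t₀)‖ / 2 with hδ
  have hδ0 : 0 < δ := half_pos (norm_pos_iff.2 (hUt x₀ hx₀ t₀ (hsub ht₀) (hsne t₀ ht₀)))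
  have htube : ∀ᶠ x in 𝓝 x₀, ∀ t ∈ Metric.sphere (0 : ℂ) σ, δ < ‖U (x, c t)‖ := by
    refine (isCompact_sphere (0 : ℂ) σ).eventually_forall_of_forall_eventually fun t ht => ?_
    refine (hUcont x₀ hx₀ t (hsub ht)).norm.eventually_const_lt ?_
    have h1 : ‖U (x₀, c t₀)‖ ≤ ‖U (x₀, c t)‖ := hmin ht
    have h2 : 0 < ‖U (x₀, c t₀)‖ := by linarith
    show δ < ‖U (x₀, c t)‖
    linarith
  have hsmall : ∀ᶠ x in 𝓝 x₀, ‖U (x, s₀)‖ < δ := by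
    have h1 : ContinuousAt (fun x => ‖U (x, s₀)‖) x₀ :=
      (ContinuousAt.comp (f := fun x : X => (x, s₀)) (g := U) (x := x₀) hU.continuousAt
        (by fun_prop)).norm
    refine h1.eventually_lt_const ?_
    simpa [h0] using hδ0
  filter_upwards [htube, hsmall, Metric.ball_mem_nhds x₀ hr] with x hx hxs hxr
  by_contra hne
  have hnz : ∀ t ∈ Metric.closedBall (0 : ℂ) σ, U (x, c t) ≠ 0 := fun t ht => by
    rcases eq_or_ne t 0 with rfl | ht0
    · rwa [hc0]
    · exact hUt x hxr t ht ht0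
  have hdiff : ∀ t ∈ Metric.closedBall (0 : ℂ) σ,
      DifferentiableAt ℂ (fun t => (U (x, c t))⁻¹) t := fun t ht => by
    have h1 : DifferentiableAt ℂ (fun t => U (x, c t)) t :=
      ((hUan _ (hmem x hxr t ht)).1.comp (f := fun t : ℂ => (x, c t))
        (analyticAt_const.prod (hcan t))).differentiableAt
    exact h1.inv (hnz t ht)
  have hle := Complex.norm_le_of_forall_mem_frontier_norm_le (U := Metric.ball (0 : ℂ) σ)
    (f := fun t => (U (x, c t))⁻¹) (C := δ⁻¹) Metric.isBounded_ball
    (DifferentiableOn.diffContOnCl fun t ht => (hdiff t (by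
      rwa [closure_ball _ hσ0.ne'] at ht)).differentiableWithinAt)
    (fun t ht => by
      rw [frontier_ball _ hσ0.ne'] at ht
      rw [norm_inv]
      exact inv_anti₀ hδ0 (hx t ht).le)
    (subset_closure (Metric.mem_ball_self hσ0))
  simp only [hc0, norm_inv] at hle
  have := (inv_le_inv₀ (norm_pos_iff.2 hne) hδ0).1 hle
  linarith

end Cylinder

section Jacobian

variable {f : (Fin n → ℂ) → ℂ → Fin n → ℂ} {g : (Fin n → ℂ) → ℂ → ℂ}

theorem fderiv_coord_apply {X : Type*} [NormedAddCommGroup X] [NormedSpace ℂ X]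
    {F : X → Fin n → ℂ} {x : X} (hF : DifferentiableAt ℂ F x) (i : Fin n) (v : X) :
    fderiv ℂ (fun y => F y i) x v = fderiv ℂ F x v i := by
  rw [(hasFDerivAt_pi'.1 hF.hasFDerivAt i).fderiv]
  rfl

theorem sum_smul_dirCT (c : Fin (n + 1) → ℂ) :
    ∑ k, c k • dirCT n k = (fun i => c i.castSucc, c (Fin.last n)) := by
  rw [Fin.sum_univ_castSucc]
  have h1 : ∀ i : Fin n, dirCT n i.castSucc = (Pi.single i 1, 0) := fun i => by
    simp [dirCT]
  have h2 : dirCT n (Fin.last n) = (0, 1) := by simp [dirCT]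
  simp only [h1, h2]
  ext j
  · simp [Prod.fst_sum, Finset.sum_apply, Pi.single_apply]
  · simp [Prod.snd_sum]

theorem fderiv_snoc_apply {p : (Fin n → ℂ) × ℂ}
    (hf : DifferentiableAt ℂ (fun q : (Fin n → ℂ) × ℂ => f q.1 q.2) p)
    (hg : DifferentiableAt ℂ (fun q : (Fin n → ℂ) × ℂ => g q.1 q.2) p) (v : (Fin n → ℂ) × ℂ)
    (i : Fin (n + 1)) :
    fderiv ℂ (fun q : (Fin n → ℂ) × ℂ =>
      (Fin.snoc (f q.1 q.2) (g q.1 q.2) : Fin (n + 1) → ℂ) i) p v =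
      (Fin.snoc (fderiv ℂ (fun q : (Fin n → ℂ) × ℂ => (f q.1 q.2, g q.1 q.2)) p v).1
        (fderiv ℂ (fun q : (Fin n → ℂ) × ℂ => (f q.1 q.2, g q.1 q.2)) p v).2 :
          Fin (n + 1) → ℂ) i := by
  rw [hf.fderiv_prodMk hg]
  refine Fin.lastCases ?_ (fun j => ?_) i
  · simp
  · simp [fderiv_coord_apply hf]

theorem jacFull_mulVec {p : (Fin n → ℂ) × ℂ}
    (hf : DifferentiableAt ℂ (fun q : (Fin n → ℂ) × ℂ => f q.1 q.2) p)
    (hg : DifferentiableAt ℂ (fun q : (Fin n → ℂ) × ℂ => g q.1 q.2) p) (c : Fin (n + 1) → ℂ)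
    (i : Fin (n + 1)) :
    (jacFull f g p).mulVec c i =
      (Fin.snoc
        (fderiv ℂ (fun q : (Fin n → ℂ) × ℂ => (f q.1 q.2, g q.1 q.2)) p
          (fun j => c j.castSucc, c (Fin.last n))).1
        (fderiv ℂ (fun q : (Fin n → ℂ) × ℂ => (f q.1 q.2, g q.1 q.2)) p
          (fun j => c j.castSucc, c (Fin.last n))).2 : Fin (n + 1) → ℂ) i := by
  rw [← fderiv_snoc_apply hf hg, ← sum_smul_dirCT, map_sum]
  simp only [Matrix.mulVec, dotProduct, jacFull, Matrix.of_apply, map_smul, smul_eq_mul]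
  exact Finset.sum_congr rfl fun k _ => mul_comm _ _

theorem jacFull_det_eq_zero_iff {p : (Fin n → ℂ) × ℂ}
    (hf : DifferentiableAt ℂ (fun q : (Fin n → ℂ) × ℂ => f q.1 q.2) p)
    (hg : DifferentiableAt ℂ (fun q : (Fin n → ℂ) × ℂ => g q.1 q.2) p) :
    (jacFull f g p).det = 0 ↔
      ∃ v ≠ 0, fderiv ℂ (fun q : (Fin n → ℂ) × ℂ => (f q.1 q.2, g q.1 q.2)) p v = 0 := by
  rw [← Matrix.exists_mulVec_eq_zero_iff]
  constructor
  · rintro ⟨c, hc, h⟩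
    refine ⟨(fun j => c j.castSucc, c (Fin.last n)), fun h0 => hc (funext fun i => ?_), ?_⟩
    · refine Fin.lastCases (congrArg Prod.snd h0) (fun j => ?_) i
      exact congrFun (congrArg Prod.fst h0) j
    · have h1 : ∀ i, _ = _ := fun i => (jacFull_mulVec hf hg c i).symm.trans (congrFun h i)
      refine Prod.ext (funext fun j => ?_) ?_
      · simpa using h1 j.castSucc
      · simpa using h1 (Fin.last n)
  · rintro ⟨v, hv, h⟩
    refine ⟨Fin.snoc v.1 v.2, fun h0 => hv ?_, funext fun i => ?_⟩
    · refine Prod.ext (funext fun j => ?_) ?_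
      · simpa using congrFun h0 j.castSucc
      · simpa using congrFun h0 (Fin.last n)
    · rw [jacFull_mulVec hf hg]
      simp only [Fin.snoc_castSucc, Fin.snoc_last, h]
      refine Fin.lastCases ?_ (fun j => ?_) i <;> simp

theorem surjective_of_jacFull_det_ne_zero {p : (Fin n → ℂ) × ℂ}
    (hf : DifferentiableAt ℂ (fun q : (Fin n → ℂ) × ℂ => f q.1 q.2) p)
    (hg : DifferentiableAt ℂ (fun q : (Fin n → ℂ) × ℂ => g q.1 q.2) p)
    (h : (jacFull f g p).det ≠ 0) :
    Function.Surjective (fderiv ℂ (fun q : (Fin n → ℂ) × ℂ => (f q.1 q.2, g q.1 q.2)) p) := by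
  have hinj : Function.Injective
      (fderiv ℂ (fun q : (Fin n → ℂ) × ℂ => (f q.1 q.2, g q.1 q.2)) p).toLinearMap := by
    refine (injective_iff_map_eq_zero _).2 fun v hv => ?_
    by_contra hv0
    exact h ((jacFull_det_eq_zero_iff hf hg).2 ⟨v, hv0, hv⟩)
  exact LinearMap.injective_iff_surjective.1 hinj

theorem analyticAt_jacFull_det {p : (Fin n → ℂ) × ℂ}
    (hf : AnalyticAt ℂ (fun q : (Fin n → ℂ) × ℂ => f q.1 q.2) p)
    (hg : AnalyticAt ℂ (fun q : (Fin n → ℂ) × ℂ => g q.1 q.2) p) :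
    AnalyticAt ℂ (fun q => (jacFull f g q).det) p := by
  simp only [Matrix.det_apply, jacFull, Matrix.of_apply]
  refine Finset.analyticAt_fun_sum _ fun σ _ => AnalyticAt.const_smul
    (Finset.analyticAt_fun_prod _ fun j _ => ?_)
  refine analyticAt_fderiv_apply ?_ _
  refine Fin.lastCases (by simpa using hg) (fun j => ?_) (σ j)
  simpa using (analyticAt_pi_iff.1 hf) j

theorem jacFull_det_eq_zero_of_eventually_zero
    (h : ∀ᶠ p in 𝓝 (0 : (Fin n → ℂ) × ℂ), g p.1 p.2 = 0) :
    ∀ᶠ p in 𝓝 (0 : (Fin n → ℂ) × ℂ), (jacFull f g p).det = 0 := by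
  filter_upwards [h.eventually_nhds] with p hp
  refine Matrix.det_eq_zero_of_row_eq_zero (Fin.last n) fun k => ?_
  have : (fun q : (Fin n → ℂ) × ℂ => g q.1 q.2) =ᶠ[𝓝 p] fun _ => 0 := hp
  simp [jacFull, this.fderiv_eq]

theorem jacz_mulVec {z : Fin n → ℂ} (hf : DifferentiableAt ℂ (fun z => f z 0) z)
    (v : Fin n → ℂ) : (jacz f z).mulVec v = fderiv ℂ (fun z => f z 0) z v := by
  funext i
  have h1 := (fderiv ℂ (fun z => f z 0 i) z).toLinearMap.pi_apply_eq_sum_univ v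
  have h2 : fderiv ℂ (fun z => f z 0) z v i = fderiv ℂ (fun z => f z 0 i) z v :=
    (fderiv_coord_apply hf i v).symm
  rw [h2]
  refine Eq.trans ?_ h1.symm
  simp only [Matrix.mulVec, dotProduct, jacz, Matrix.of_apply, pd, smul_eq_mul]
  refine Finset.sum_congr rfl fun k _ => ?_
  rw [mul_comm]
  congr 1
  refine congrArg (fderiv ℂ (fun z => f z 0 i) z) (funext fun j => ?_)
  simp [Pi.single_apply, eq_comm]

theorem jacz_det_eq_zero_iff {z : Fin n → ℂ} (hf : DifferentiableAt ℂ (fun z => f z 0) z) :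
    (jacz f z).det = 0 ↔ ∃ v ≠ 0, fderiv ℂ (fun z => f z 0) z v = 0 := by
  simp only [← Matrix.exists_mulVec_eq_zero_iff, jacz_mulVec hf]

theorem analyticAt_jacz_det {z : Fin n → ℂ} (hf : AnalyticAt ℂ (fun z => f z 0) z) :
    AnalyticAt ℂ (fun z => (jacz f z).det) z := by
  simp only [Matrix.det_apply, jacz, Matrix.of_apply]
  exact Finset.analyticAt_fun_sum _ fun σ _ => AnalyticAt.const_smul
    (Finset.analyticAt_fun_prod _ fun j _ =>
      analyticAt_fderiv_apply ((analyticAt_pi_iff.1 hf) (σ j)) _)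

end Jacobian

section SegreMap

/-- A holomorphic Segre preserving map, with both defining functions of source and target. -/
structure SegreMap (Q P Q' P' : (Fin n → ℂ) → (Fin n → ℂ) → ℂ → ℂ)
    (f : (Fin n → ℂ) → ℂ → Fin n → ℂ) (g : (Fin n → ℂ) → ℂ → ℂ)
    (ft : (Fin n → ℂ) → ℂ → Fin n → ℂ) (gt : (Fin n → ℂ) → ℂ → ℂ) : Prop where
  source : SegrePair Q P
  target : SegrePair Q' P'
  analytic_f : AnalyticAt ℂ (fun p : (Fin n → ℂ) × ℂ => f p.1 p.2) 0
  analytic_g : AnalyticAt ℂ (fun p : (Fin n → ℂ) × ℂ => g p.1 p.2) 0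
  analytic_ft : AnalyticAt ℂ (fun p : (Fin n → ℂ) × ℂ => ft p.1 p.2) 0
  analytic_gt : AnalyticAt ℂ (fun p : (Fin n → ℂ) × ℂ => gt p.1 p.2) 0
  f_zero : f 0 0 = 0
  g_zero : g 0 0 = 0
  ft_zero : ft 0 0 = 0
  gt_zero : gt 0 0 = 0
  maps : ∀ᶠ x in 𝓝 (0 : (Fin n → ℂ) × (Fin n → ℂ) × ℂ),
    g x.1 (Q x.1 x.2.1 x.2.2) =
      Q' (f x.1 (Q x.1 x.2.1 x.2.2)) (ft x.2.1 x.2.2) (gt x.2.1 x.2.2)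

variable {Q P Q' P' : (Fin n → ℂ) → (Fin n → ℂ) → ℂ → ℂ}
  {f ft : (Fin n → ℂ) → ℂ → Fin n → ℂ} {g gt : (Fin n → ℂ) → ℂ → ℂ}

theorem SegreMap.symm (h : SegreMap Q P Q' P' f g ft gt) : SegreMap P Q P' Q' ft gt f g := by
  refine ⟨h.source.symm, h.target.symm, h.analytic_ft, h.analytic_gt, h.analytic_f, h.analytic_g,
    h.ft_zero, h.gt_zero, h.f_zero, h.g_zero, ?_⟩
  have hP := h.source.analytic'.continuousAt
  have hP0 := h.source.symm.apply_zero
  have hA : Tendsto (fun x : (Fin n → ℂ) × (Fin n → ℂ) × ℂ => (x.2.1, x.1, P x.1 x.2.1 x.2.2))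
      (𝓝 0) (𝓝 0) := by
    have hc : ContinuousAt (fun x : (Fin n → ℂ) × (Fin n → ℂ) × ℂ =>
      (x.2.1, x.1, P x.1 x.2.1 x.2.2)) 0 := by fun_prop
    have hc' := hc.tendsto
    simp only [Prod.fst_zero, Prod.snd_zero, hP0] at hc'
    exact hc'
  have hB : Tendsto (fun x : (Fin n → ℂ) × (Fin n → ℂ) × ℂ => (x.2.1, x.1, x.2.2))
      (𝓝 0) (𝓝 0) := Continuous.tendsto' (by fun_prop) _ _ rfl
  have hC : Tendsto (fun x : (Fin n → ℂ) × (Fin n → ℂ) × ℂ =>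
      (ft x.2.1 x.2.2, f x.1 (Q x.1 x.2.1 x.2.2), gt x.2.1 x.2.2)) (𝓝 0) (𝓝 0) := by
    have hQ := h.source.analytic.continuousAt
    have hQ0 := h.source.apply_zero
    have h1 : Tendsto (fun x : (Fin n → ℂ) × (Fin n → ℂ) × ℂ => (x.1, Q x.1 x.2.1 x.2.2))
        (𝓝 0) (𝓝 0) := by
      have hc : ContinuousAt (fun x : (Fin n → ℂ) × (Fin n → ℂ) × ℂ =>
        (x.1, Q x.1 x.2.1 x.2.2)) 0 := by fun_prop
      have hc' := hc.tendsto
      simp only [Prod.fst_zero, Prod.snd_zero, hQ0] at hc'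
      exact hc'
    have h2 : Tendsto (fun x : (Fin n → ℂ) × (Fin n → ℂ) × ℂ => x.2) (𝓝 0) (𝓝 0) :=
      continuous_snd.tendsto' _ _ rfl
    have e1 := h.analytic_f.continuousAt.tendsto.comp h1
    have e2 := h.analytic_ft.continuousAt.tendsto.comp h2
    have e3 := h.analytic_gt.continuousAt.tendsto.comp h2
    simp only [Prod.fst_zero, Prod.snd_zero, h.f_zero, h.ft_zero, h.gt_zero] at e1 e2 e3
    exact e2.prodMk_nhds (e1.prodMk_nhds e3)
  filter_upwards [hA.eventually h.maps, hB.eventually h.source.comp,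
    hA.eventually (hC.eventually h.target.comp')] with x h1 h2 h3
  simp only [h2] at h1 h3
  rw [h1, h3]

theorem SegreMap.eventually_gt_zero (h : SegreMap Q P Q' P' f g ft gt) :
    ∀ᶠ χ in 𝓝 (0 : Fin n → ℂ), gt χ 0 = 0 := by
  have hA : Tendsto (fun χ : Fin n → ℂ => ((0 : Fin n → ℂ), χ, (0 : ℂ))) (𝓝 0) (𝓝 0) :=
    Continuous.tendsto' (by fun_prop) _ _ rfl
  have hB : Tendsto (fun χ : Fin n → ℂ => (χ, (0 : ℂ))) (𝓝 0) (𝓝 0) :=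
    Continuous.tendsto' (by fun_prop) _ _ rfl
  have hC : Tendsto (fun χ : Fin n → ℂ => (ft χ 0, gt χ 0)) (𝓝 0) (𝓝 0) := by
    have e2 := h.analytic_ft.continuousAt.tendsto.comp hB
    have e3 := h.analytic_gt.continuousAt.tendsto.comp hB
    simp only [Prod.fst_zero, Prod.snd_zero, h.ft_zero, h.gt_zero] at e2 e3
    exact e2.prodMk_nhds e3
  filter_upwards [hA.eventually h.maps, hB.eventually h.source.normal_left,
    hC.eventually h.target.normal_left] with χ h1 h2 h3
  simp only [h2, h.f_zero, h.g_zero, h3] at h1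
  exact h1.symm

/-- Sources of class `𝒞`, in terms of a single defining function. -/
def FrequentlySeparating (Q : (Fin n → ℂ) → (Fin n → ℂ) → ℂ → ℂ) : Prop :=
  ∃ᶠ χ in 𝓝 (0 : Fin n → ℂ),
    Separating (fun x : (Fin n → ℂ) × (Fin n → ℂ) => Q x.1 x.2 0) χ

theorem SegrePair.analytic_slice (h : SegrePair Q P) :
    AnalyticAt ℂ (fun x : (Fin n → ℂ) × (Fin n → ℂ) => Q x.1 x.2 0) 0 :=
  AnalyticAt.comp (f := fun x : (Fin n → ℂ) × (Fin n → ℂ) => (x.1, x.2, (0 : ℂ)))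
    (g := fun x : (Fin n → ℂ) × (Fin n → ℂ) × ℂ => Q x.1 x.2.1 x.2.2) h.analytic
    (analyticAt_fst.prod (analyticAt_snd.prod analyticAt_const))

theorem SegrePair.frequently_separating (h : SegrePair Q P) (hsep : FrequentlySeparating Q) :
    ∃ᶠ p in 𝓝 (0 : (Fin n → ℂ) × ℂ), ∀ᶠ p' in 𝓝 p,
      Separating (fun x : (Fin n → ℂ) × (Fin n → ℂ) × ℂ => Q x.1 x.2.1 x.2.2) p' := by
  have hA : Tendsto (fun χ : Fin n → ℂ => (χ, (0 : ℂ))) (𝓝 0) (𝓝 0) :=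
    Continuous.tendsto' (by fun_prop) _ _ rfl
  have han := hA.eventually (eventually_nhds_slice (E := Fin n → ℂ) h.analytic.eventually_analyticAt)
  have hpers := hA.eventually (eventually_separating h.analytic)
  refine hA.frequently ((hsep.and_eventually (han.and (hpers.and
    (hA.eventually h.normal_left.eventually_nhds)))).mono ?_)
  rintro χ ⟨hχ, han, hpers, hnorm⟩
  refine hpers fun v hv => ?_
  have e1 : v.2 = 0 := by
    have h1 := hv.self_of_nhds
    rw [← fderiv_slice_right (x := ((0 : Fin n → ℂ), (χ, (0 : ℂ))))
      han.self_of_nhds.differentiableAt v] at h1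
    have h2 : (fun y : (Fin n → ℂ) × ℂ => Q 0 y.1 y.2) =ᶠ[𝓝 (χ, 0)] fun y => y.2 := hnorm
    rw [h2.fderiv_eq, fderiv_snd] at h1
    exact h1
  have e2 : v.1 = 0 := by
    refine hχ _ ?_
    filter_upwards [hv, eventually_nhds_slice_left han] with z hz han
    have hd := han.self_of_nhds.differentiableAt
    have hin : HasFDerivAt (fun x : (Fin n → ℂ) × (Fin n → ℂ) => (x.1, x.2, (0 : ℂ)))
        ((ContinuousLinearMap.fst ℂ _ _).prod ((ContinuousLinearMap.snd ℂ _ _).prod 0)) (z, χ) :=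
      hasFDerivAt_fst.prodMk (HasFDerivAt.prodMk (f₁ := fun x : (Fin n → ℂ) × (Fin n → ℂ) => x.2)
        hasFDerivAt_snd (hasFDerivAt_const (0 : ℂ) (z, χ)))
    have h3 := (HasFDerivAt.comp (g := fun x : (Fin n → ℂ) × (Fin n → ℂ) × ℂ => Q x.1 x.2.1 x.2.2)
      (z, χ) hd.hasFDerivAt hin).fderiv
    rw [Function.comp_def] at h3
    rw [h3]
    have h4 : v = (v.1, 0) := Prod.ext rfl e1
    rw [h4] at hz
    simpa using hz
  exact Prod.ext e2 e1

theorem SegreMap.null_of_jacFull (h : SegreMap Q P Q' P' f g ft gt)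
    (hsep : FrequentlySeparating Q)
    (hJ : ∀ᶠ p in 𝓝 (0 : (Fin n → ℂ) × ℂ), (jacFull ft gt p).det = 0) :
    TransversallyNull g gt ∧
      ∀ᶠ p in 𝓝 (0 : ((Fin n → ℂ) × ℂ) × ((Fin n → ℂ) × ℂ)),
        Q' (f p.1.1 p.1.2) (ft p.2.1 p.2.2) 0 = 0 := by
  have hΨ : AnalyticAt ℂ (fun y : (Fin n → ℂ) × ℂ × (Fin n → ℂ) × ℂ =>
      Q' (f y.1 y.2.1) y.2.2.1 y.2.2.2 - g y.1 y.2.1) 0 := by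
    have ha : AnalyticAt ℂ (fun y : (Fin n → ℂ) × ℂ × (Fin n → ℂ) × ℂ => (y.1, y.2.1)) 0 :=
      analyticAt_fst.prod (analyticAt_fst.comp analyticAt_snd)
    have hf := AnalyticAt.comp (f := fun y : (Fin n → ℂ) × ℂ × (Fin n → ℂ) × ℂ => (y.1, y.2.1))
      (g := fun p : (Fin n → ℂ) × ℂ => f p.1 p.2) (x := 0) h.analytic_f ha
    have hg := AnalyticAt.comp (f := fun y : (Fin n → ℂ) × ℂ × (Fin n → ℂ) × ℂ => (y.1, y.2.1))
      (g := fun p : (Fin n → ℂ) × ℂ => g p.1 p.2) (x := 0) h.analytic_g ha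
    have hin := hf.prod (analyticAt_snd.comp (analyticAt_snd (𝕜 := ℂ)
      (p := (0 : (Fin n → ℂ) × ℂ × (Fin n → ℂ) × ℂ))))
    refine AnalyticAt.sub ?_ hg
    exact AnalyticAt.comp (g := fun x : (Fin n → ℂ) × (Fin n → ℂ) × ℂ => Q' x.1 x.2.1 x.2.2)
      (by simp only [Function.comp_apply, Prod.fst_zero, Prod.snd_zero, h.f_zero]
          exact h.target.analytic) hin
  have key := eventually_zero_of_degenerate h.source.analytic h.source.apply_zero
    (h := fun p : (Fin n → ℂ) × ℂ => (ft p.1 p.2, gt p.1 p.2))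
    (h.analytic_ft.prod h.analytic_gt) (by simp [h.ft_zero, h.gt_zero]) ?_ hΨ
    (h.maps.mono fun x hx => sub_eq_zero.2 hx.symm)
  · have hnull : TransversallyNull g gt := by
      constructor
      · have hA : Tendsto (fun p : (Fin n → ℂ) × ℂ => (p.1, p.2, (0 : (Fin n → ℂ) × ℂ)))
          (𝓝 0) (𝓝 0) := Continuous.tendsto' (by fun_prop) _ _ rfl
        have hB : Tendsto (fun p : (Fin n → ℂ) × ℂ => (f p.1 p.2, (0 : ℂ))) (𝓝 0) (𝓝 0) := by
          have := h.analytic_f.continuousAt.tendsto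
          simp only [Prod.fst_zero, Prod.snd_zero, h.f_zero] at this
          exact this.prodMk_nhds tendsto_const_nhds
        filter_upwards [hA.eventually key, hB.eventually h.target.normal_right] with p h1 h2
        simp only [Prod.fst_zero, Prod.snd_zero, h.ft_zero, h.gt_zero, h2, zero_sub,
          neg_eq_zero] at h1
        exact h1
      · have hA : Tendsto (fun p : (Fin n → ℂ) × ℂ => ((0 : Fin n → ℂ), (0 : ℂ), p))
          (𝓝 0) (𝓝 0) := Continuous.tendsto' (by fun_prop) _ _ rfl
        have hB : Tendsto (fun p : (Fin n → ℂ) × ℂ => (ft p.1 p.2, gt p.1 p.2)) (𝓝 0) (𝓝 0) := by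
          have e1 := h.analytic_ft.continuousAt.tendsto
          have e2 := h.analytic_gt.continuousAt.tendsto
          simp only [Prod.fst_zero, Prod.snd_zero, h.ft_zero, h.gt_zero] at e1 e2
          exact e1.prodMk_nhds e2
        filter_upwards [hA.eventually key, hB.eventually h.target.normal_left] with p h1 h2
        simpa only [h.f_zero, h.g_zero, h2, sub_zero] using h1
    refine ⟨hnull, ?_⟩
    have hA : Tendsto (fun p : ((Fin n → ℂ) × ℂ) × ((Fin n → ℂ) × ℂ) => (p.1.1, p.1.2, p.2))
      (𝓝 0) (𝓝 0) := Continuous.tendsto' (by fun_prop) _ _ rfl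
    filter_upwards [hA.eventually key,
      (continuous_fst.tendsto' (0 : ((Fin n → ℂ) × ℂ) × ((Fin n → ℂ) × ℂ)) 0 rfl).eventually hnull.1,
      (continuous_snd.tendsto' (0 : ((Fin n → ℂ) × ℂ) × ((Fin n → ℂ) × ℂ)) 0 rfl).eventually hnull.2]
      with p h1 h2 h3
    simpa only [h2, h3, sub_zero] using h1
  · refine ((h.source.frequently_separating hsep).and_eventually (hJ.and
      (h.analytic_ft.eventually_analyticAt.and
        h.analytic_gt.eventually_analyticAt)).eventually_nhds).mono ?_
    rintro p₀ ⟨h1, h2⟩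
    filter_upwards [h1, h2] with p hp ⟨hdet, hft, hgt⟩
    obtain ⟨v, hv, hv'⟩ :=
      (jacFull_det_eq_zero_iff hft.differentiableAt hgt.differentiableAt).1 hdet
    exact ⟨v, hv', mt (hp v) hv⟩

theorem SegreMap.null_of_jacFull' (h : SegreMap Q P Q' P' f g ft gt)
    (hsep : FrequentlySeparating P)
    (hJ : ∀ᶠ p in 𝓝 (0 : (Fin n → ℂ) × ℂ), (jacFull f g p).det = 0) :
    TransversallyNull g gt ∧
      ∀ᶠ p in 𝓝 (0 : ((Fin n → ℂ) × ℂ) × ((Fin n → ℂ) × ℂ)),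
        Q' (f p.1.1 p.1.2) (ft p.2.1 p.2.2) 0 = 0 := by
  obtain ⟨⟨h1, h2⟩, h3⟩ := h.symm.null_of_jacFull hsep hJ
  refine ⟨⟨h2, h1⟩, ?_⟩
  have hA : Tendsto (fun p : ((Fin n → ℂ) × ℂ) × ((Fin n → ℂ) × ℂ) => (p.2, p.1))
    (𝓝 0) (𝓝 0) := Continuous.tendsto' (by fun_prop) _ _ rfl
  have hB : Tendsto (fun p : ((Fin n → ℂ) × ℂ) × ((Fin n → ℂ) × ℂ) =>
      (f p.1.1 p.1.2, ft p.2.1 p.2.2, (0 : ℂ))) (𝓝 0) (𝓝 0) := by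
    have e1 := h.analytic_f.continuousAt.tendsto.comp
      (continuous_fst.tendsto' (0 : ((Fin n → ℂ) × ℂ) × ((Fin n → ℂ) × ℂ)) 0 rfl)
    have e2 := h.analytic_ft.continuousAt.tendsto.comp
      (continuous_snd.tendsto' (0 : ((Fin n → ℂ) × ℂ) × ((Fin n → ℂ) × ℂ)) 0 rfl)
    simp only [Prod.fst_zero, Prod.snd_zero, h.f_zero, h.ft_zero] at e1 e2
    exact e1.prodMk_nhds (e2.prodMk_nhds tendsto_const_nhds)
  filter_upwards [hA.eventually h3, hB.eventually h.target.comp] with p h4 h5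
  simpa only [h4] using h5

theorem SegreMap.g_eq_zero_of_jacz (h : SegreMap Q P Q' P' f g ft gt)
    (hsep : FrequentlySeparating Q)
    (hJ : ∀ᶠ χ in 𝓝 (0 : Fin n → ℂ), (jacz ft χ).det = 0) :
    ∀ᶠ p in 𝓝 (0 : (Fin n → ℂ) × ℂ), g p.1 p.2 = 0 := by
  have hΨ : AnalyticAt ℂ (fun y : (Fin n → ℂ) × ℂ × (Fin n → ℂ) =>
      Q' (f y.1 y.2.1) y.2.2 0 - g y.1 y.2.1) 0 := by
    have ha : AnalyticAt ℂ (fun y : (Fin n → ℂ) × ℂ × (Fin n → ℂ) => (y.1, y.2.1)) 0 :=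
      analyticAt_fst.prod (analyticAt_fst.comp analyticAt_snd)
    have hf := AnalyticAt.comp (f := fun y : (Fin n → ℂ) × ℂ × (Fin n → ℂ) => (y.1, y.2.1))
      (g := fun p : (Fin n → ℂ) × ℂ => f p.1 p.2) (x := 0) h.analytic_f ha
    have hg := AnalyticAt.comp (f := fun y : (Fin n → ℂ) × ℂ × (Fin n → ℂ) => (y.1, y.2.1))
      (g := fun p : (Fin n → ℂ) × ℂ => g p.1 p.2) (x := 0) h.analytic_g ha
    have hin := hf.prod ((analyticAt_snd.comp (analyticAt_snd (𝕜 := ℂ)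
      (p := (0 : (Fin n → ℂ) × ℂ × (Fin n → ℂ))))).prod (analyticAt_const (v := (0 : ℂ))))
    refine AnalyticAt.sub ?_ hg
    exact AnalyticAt.comp (g := fun x : (Fin n → ℂ) × (Fin n → ℂ) × ℂ => Q' x.1 x.2.1 x.2.2)
      (by simp only [Function.comp_apply, Prod.fst_zero, Prod.snd_zero, h.f_zero]
          exact h.target.analytic) hin
  have hft : AnalyticAt ℂ (fun χ => ft χ 0) 0 :=
    AnalyticAt.comp (f := fun χ : Fin n → ℂ => (χ, (0 : ℂ)))
      (g := fun p : (Fin n → ℂ) × ℂ => ft p.1 p.2) h.analytic_ft (by fun_prop)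
  have hA : Tendsto (fun x : (Fin n → ℂ) × (Fin n → ℂ) => (x.1, x.2, (0 : ℂ))) (𝓝 0) (𝓝 0) :=
    Continuous.tendsto' (by fun_prop) _ _ rfl
  have key := eventually_zero_of_degenerate h.source.analytic_slice h.source.apply_zero
    (h := fun χ : Fin n → ℂ => ft χ 0) hft h.ft_zero ?_ hΨ (by
      filter_upwards [hA.eventually h.maps, (continuous_snd.tendsto'
        (0 : (Fin n → ℂ) × (Fin n → ℂ)) 0 rfl).eventually h.eventually_gt_zero] with x h1 h2
      rw [h2] at h1
      exact sub_eq_zero.2 h1.symm)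
  · have hA : Tendsto (fun p : (Fin n → ℂ) × ℂ => (p.1, p.2, (0 : Fin n → ℂ)))
      (𝓝 0) (𝓝 0) := Continuous.tendsto' (by fun_prop) _ _ rfl
    have hB : Tendsto (fun p : (Fin n → ℂ) × ℂ => (f p.1 p.2, (0 : ℂ))) (𝓝 0) (𝓝 0) := by
      have := h.analytic_f.continuousAt.tendsto
      simp only [Prod.fst_zero, Prod.snd_zero, h.f_zero] at this
      exact this.prodMk_nhds tendsto_const_nhds
    filter_upwards [hA.eventually key, hB.eventually h.target.normal_right] with p h1 h2
    simp only [h.ft_zero, h2, zero_sub, neg_eq_zero] at h1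
    exact h1
  · refine ((hsep.and_eventually (eventually_separating h.source.analytic_slice)).and_eventually
      (hJ.and hft.eventually_analyticAt).eventually_nhds).mono ?_
    rintro p₀ ⟨⟨h1, h1'⟩, h2⟩
    filter_upwards [h1' h1, h2] with p hp ⟨hdet, hft⟩
    obtain ⟨v, hv, hv'⟩ := (jacz_det_eq_zero_iff hft.differentiableAt).1 hdet
    exact ⟨v, hv', mt (hp v) hv⟩

end SegreMap

section Transversality

variable {Q P Q' P' : (Fin n → ℂ) → (Fin n → ℂ) → ℂ → ℂ}
  {f ft : (Fin n → ℂ) → ℂ → Fin n → ℂ} {g gt : (Fin n → ℂ) → ℂ → ℂ}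

/-- The defining equation of the complexified hypersurface. -/
def definingEq (Q : (Fin n → ℂ) → (Fin n → ℂ) → ℂ → ℂ)
    (p : ((Fin n → ℂ) × ℂ) × ((Fin n → ℂ) × ℂ)) : ℂ :=
  Q p.1.1 p.2.1 p.2.2 - p.1.2

/-- The product map `(f, g) × (ft, gt)`. -/
def prodMap (f : (Fin n → ℂ) → ℂ → Fin n → ℂ) (g : (Fin n → ℂ) → ℂ → ℂ)
    (ft : (Fin n → ℂ) → ℂ → Fin n → ℂ) (gt : (Fin n → ℂ) → ℂ → ℂ)
    (p : ((Fin n → ℂ) × ℂ) × ((Fin n → ℂ) × ℂ)) : ((Fin n → ℂ) × ℂ) × ((Fin n → ℂ) × ℂ) :=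
  ((f p.1.1 p.1.2, g p.1.1 p.1.2), (ft p.2.1 p.2.2, gt p.2.1 p.2.2))

/-- The parametrization of the complexified hypersurface by `(z, χ, τ)`. -/
def graphMap (Q : (Fin n → ℂ) → (Fin n → ℂ) → ℂ → ℂ) (x : (Fin n → ℂ) × (Fin n → ℂ) × ℂ) :
    ((Fin n → ℂ) × ℂ) × ((Fin n → ℂ) × ℂ) :=
  ((x.1, Q x.1 x.2.1 x.2.2), x.2)

theorem hasFDerivAt_definingEq_zero (h : SegrePair Q P) :
    HasFDerivAt (definingEq Q) ((ContinuousLinearMap.snd ℂ (Fin n → ℂ) ℂ).comp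
      (ContinuousLinearMap.snd ℂ ((Fin n → ℂ) × ℂ) ((Fin n → ℂ) × ℂ)) -
      (ContinuousLinearMap.snd ℂ (Fin n → ℂ) ℂ).comp
      (ContinuousLinearMap.fst ℂ ((Fin n → ℂ) × ℂ) ((Fin n → ℂ) × ℂ))) 0 := by
  have h1 := hasFDerivAt_of_normal h.analytic h.normal_left h.normal_right
  let L : ((Fin n → ℂ) × ℂ) × ((Fin n → ℂ) × ℂ) →L[ℂ] (Fin n → ℂ) × (Fin n → ℂ) × ℂ :=
    ((ContinuousLinearMap.fst ℂ _ _).comp (ContinuousLinearMap.fst ℂ _ _)).prod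
      (ContinuousLinearMap.snd ℂ _ _)
  have h2 := HasFDerivAt.comp (0 : ((Fin n → ℂ) × ℂ) × ((Fin n → ℂ) × ℂ)) (f := L)
    (g := fun x : (Fin n → ℂ) × (Fin n → ℂ) × ℂ => Q x.1 x.2.1 x.2.2)
    (by rw [map_zero]; exact h1) L.hasFDerivAt
  exact h2.sub ((ContinuousLinearMap.snd ℂ (Fin n → ℂ) ℂ).comp
    (ContinuousLinearMap.fst ℂ ((Fin n → ℂ) × ℂ) ((Fin n → ℂ) × ℂ))).hasFDerivAt

theorem SegrePair.analyticAt_definingEq (h : SegrePair Q P) : AnalyticAt ℂ (definingEq Q) 0 := by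
  refine AnalyticAt.sub ?_ (analyticAt_snd.comp (analyticAt_fst (𝕜 := ℂ)
    (p := (0 : ((Fin n → ℂ) × ℂ) × ((Fin n → ℂ) × ℂ)))))
  exact AnalyticAt.comp (f := fun p : ((Fin n → ℂ) × ℂ) × ((Fin n → ℂ) × ℂ) => (p.1.1, p.2))
    (g := fun x : (Fin n → ℂ) × (Fin n → ℂ) × ℂ => Q x.1 x.2.1 x.2.2) h.analytic
    ((analyticAt_fst.comp analyticAt_fst).prod analyticAt_snd)

theorem SegrePair.analyticAt_graphMap (h : SegrePair Q P) : AnalyticAt ℂ (graphMap Q) 0 :=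
  (analyticAt_fst.prod h.analytic).prod analyticAt_snd

theorem SegrePair.graphMap_zero (h : SegrePair Q P) : graphMap Q 0 = 0 := by
  simp only [graphMap, Prod.fst_zero, Prod.snd_zero, h.apply_zero]
  rfl

theorem SegrePair.tendsto_graphMap (h : SegrePair Q P) : Tendsto (graphMap Q) (𝓝 0) (𝓝 0) := by
  have := h.analyticAt_graphMap.continuousAt.tendsto
  rwa [h.graphMap_zero] at this

theorem SegreMap.prodMap_zero (h : SegreMap Q P Q' P' f g ft gt) : prodMap f g ft gt 0 = 0 := by
  simp only [prodMap, Prod.fst_zero, Prod.snd_zero, h.f_zero, h.g_zero, h.ft_zero, h.gt_zero]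
  rfl

theorem SegreMap.analyticAt_prodMap (h : SegreMap Q P Q' P' f g ft gt) :
    AnalyticAt ℂ (prodMap f g ft gt) 0 :=
  (AnalyticAt.comp (f := fun p : ((Fin n → ℂ) × ℂ) × ((Fin n → ℂ) × ℂ) => p.1)
    (g := fun p : (Fin n → ℂ) × ℂ => (f p.1 p.2, g p.1 p.2))
    (h.analytic_f.prod h.analytic_g) analyticAt_fst).prod
  (AnalyticAt.comp (f := fun p : ((Fin n → ℂ) × ℂ) × ((Fin n → ℂ) × ℂ) => p.2)
    (g := fun p : (Fin n → ℂ) × ℂ => (ft p.1 p.2, gt p.1 p.2))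
    (h.analytic_ft.prod h.analytic_gt) analyticAt_snd)

theorem SegreMap.tendsto_prodMap (h : SegreMap Q P Q' P' f g ft gt) :
    Tendsto (prodMap f g ft gt) (𝓝 0) (𝓝 0) := by
  have := h.analyticAt_prodMap.continuousAt.tendsto
  rwa [h.prodMap_zero] at this

theorem SegreMap.analyticAt_definingEq_prodMap (h : SegreMap Q P Q' P' f g ft gt) :
    AnalyticAt ℂ (fun p => definingEq Q' (prodMap f g ft gt p)) 0 :=
  AnalyticAt.comp (g := definingEq Q') (by rw [h.prodMap_zero]; exact h.target.analyticAt_definingEq)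
    h.analyticAt_prodMap

/-- The derivative of the pulled back defining equation in the direction of `w`, along the
complexified source. -/
noncomputable def transversalDeriv (Q Q' : (Fin n → ℂ) → (Fin n → ℂ) → ℂ → ℂ)
    (f : (Fin n → ℂ) → ℂ → Fin n → ℂ) (g : (Fin n → ℂ) → ℂ → ℂ)
    (ft : (Fin n → ℂ) → ℂ → Fin n → ℂ) (gt : (Fin n → ℂ) → ℂ → ℂ)
    (x : (Fin n → ℂ) × (Fin n → ℂ) × ℂ) : ℂ :=
  fderiv ℂ (fun p => definingEq Q' (prodMap f g ft gt p)) (graphMap Q x) ((0, 1), 0)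

theorem SegreMap.analyticAt_transversalDeriv (h : SegreMap Q P Q' P' f g ft gt) :
    AnalyticAt ℂ (transversalDeriv Q Q' f g ft gt) 0 :=
  AnalyticAt.comp (f := graphMap Q)
    (g := fun p => fderiv ℂ (fun p => definingEq Q' (prodMap f g ft gt p)) p ((0, 1), 0))
    (by rw [h.source.graphMap_zero]
        exact analyticAt_fderiv_apply h.analyticAt_definingEq_prodMap _)
    h.source.analyticAt_graphMap

theorem SegreMap.transversalDeriv_zero (h : SegreMap Q P Q' P' f g ft gt) :
    transversalDeriv Q Q' f g ft gt 0 = - deriv (fun w => g 0 w) 0 := by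
  have hd := h.analyticAt_prodMap.differentiableAt.hasFDerivAt
  have h1 := (HasFDerivAt.comp (0 : ((Fin n → ℂ) × ℂ) × ((Fin n → ℂ) × ℂ))
    (by rw [h.prodMap_zero]; exact hasFDerivAt_definingEq_zero h.target) hd).fderiv
  have hg := ((ContinuousLinearMap.snd ℂ (Fin n → ℂ) ℂ).comp
    (ContinuousLinearMap.fst ℂ ((Fin n → ℂ) × ℂ) ((Fin n → ℂ) × ℂ))).hasFDerivAt.comp 0 hd
  have hgt := ((ContinuousLinearMap.snd ℂ (Fin n → ℂ) ℂ).comp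
    (ContinuousLinearMap.snd ℂ ((Fin n → ℂ) × ℂ) ((Fin n → ℂ) × ℂ))).hasFDerivAt.comp 0 hd
  have hline : HasDerivAt (fun w : ℂ => (((0 : Fin n → ℂ), w), ((0 : Fin n → ℂ), (0 : ℂ))))
      ((0, 1), (0, 0)) 0 :=
    ((hasDerivAt_const _ _).prodMk (hasDerivAt_id _)).prodMk (hasDerivAt_const _ _)
  have e1 := HasFDerivAt.comp_hasDerivAt (f := fun w : ℂ =>
    (((0 : Fin n → ℂ), w), ((0 : Fin n → ℂ), (0 : ℂ)))) (0 : ℂ) hg hline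
  have e2 := HasFDerivAt.comp_hasDerivAt (f := fun w : ℂ =>
    (((0 : Fin n → ℂ), w), ((0 : Fin n → ℂ), (0 : ℂ)))) (0 : ℂ) hgt hline
  have e3 := e2.unique (hasDerivAt_const (0 : ℂ) (gt 0 0))
  have e4 : deriv (fun w => g 0 w) 0 = _ := e1.deriv
  rw [e4, transversalDeriv, h.source.graphMap_zero]
  rw [Function.comp_def] at h1
  rw [h1]
  simp only [ContinuousLinearMap.comp_apply, sub_apply] at e3 ⊢
  exact (congrArg (· - _) e3).trans (zero_sub _)

/-- If the transversal derivative vanishes at a point, both Jacobians vanish there. -/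
theorem SegreMap.det_eq_zero_of_transversalDeriv (h : SegreMap Q P Q' P' f g ft gt) :
    ∀ᶠ x in 𝓝 (0 : (Fin n → ℂ) × (Fin n → ℂ) × ℂ), transversalDeriv Q Q' f g ft gt x = 0 →
      (jacFull f g (x.1, Q x.1 x.2.1 x.2.2)).det = 0 ∧ (jacFull ft gt x.2).det = 0 := by
  have hΛ := h.target.analyticAt_definingEq
  have hne : ∀ v, fderiv ℂ (definingEq Q') 0 v ≠ 0 →
      ∀ᶠ q in 𝓝 (0 : ((Fin n → ℂ) × ℂ) × ((Fin n → ℂ) × ℂ)), fderiv ℂ (definingEq Q') q v ≠ 0 :=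
    fun v hv => (analyticAt_fderiv_apply hΛ v).continuousAt.eventually_ne hv
  have hD0 := (hasFDerivAt_definingEq_zero h.target).fderiv
  have hne1 := hne ((0, 1), 0) (by rw [hD0]; simp)
  have hne2 := hne (0, (0, 1)) (by rw [hD0]; simp)
  have hG := h.source.tendsto_graphMap
  have hA := hG.eventually (h.tendsto_prodMap.eventually
    (hne1.and (hne2.and hΛ.eventually_analyticAt)))
  have hfst : Tendsto (fun p : ((Fin n → ℂ) × ℂ) × ((Fin n → ℂ) × ℂ) => p.1) (𝓝 0) (𝓝 0) :=
    continuous_fst.tendsto' _ _ rfl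
  have hsnd : Tendsto (fun p : ((Fin n → ℂ) × ℂ) × ((Fin n → ℂ) × ℂ) => p.2) (𝓝 0) (𝓝 0) :=
    continuous_snd.tendsto' _ _ rfl
  filter_upwards [hA, h.maps.eventually_nhds, h.source.analyticAt_graphMap.eventually_analyticAt,
    hG.eventually (hfst.eventually
      (h.analytic_f.eventually_analyticAt.and h.analytic_g.eventually_analyticAt)),
    hG.eventually (hsnd.eventually
      (h.analytic_ft.eventually_analyticAt.and h.analytic_gt.eventually_analyticAt))]
    with x ⟨hx1, hx2, hx3⟩ hmaps hgr ⟨hf, hg⟩ ⟨hft, hgt⟩ hu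
  have hf := hf.differentiableAt
  have hg := hg.differentiableAt
  have hft := hft.differentiableAt
  have hgt := hgt.differentiableAt
  set p := graphMap Q x with hp
  have hprod : HasFDerivAt (prodMap f g ft gt)
      (((fderiv ℂ (fun q : (Fin n → ℂ) × ℂ => (f q.1 q.2, g q.1 q.2)) p.1).comp
        (ContinuousLinearMap.fst ℂ _ _)).prod
      ((fderiv ℂ (fun q : (Fin n → ℂ) × ℂ => (ft q.1 q.2, gt q.1 q.2)) p.2).comp
        (ContinuousLinearMap.snd ℂ _ _))) p :=
    (HasFDerivAt.comp (f := fun p : ((Fin n → ℂ) × ℂ) × ((Fin n → ℂ) × ℂ) => p.1) p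
      (hf.prodMk hg).hasFDerivAt hasFDerivAt_fst).prodMk
    (HasFDerivAt.comp (f := fun p : ((Fin n → ℂ) × ℂ) × ((Fin n → ℂ) × ℂ) => p.2) p
      (hft.prodMk hgt).hasFDerivAt hasFDerivAt_snd)
  have hcomp := HasFDerivAt.comp p hx3.differentiableAt.hasFDerivAt hprod
  have hzero : (fun x => definingEq Q' (prodMap f g ft gt (graphMap Q x))) =ᶠ[𝓝 x] fun _ => 0 :=
    hmaps.mono fun y hy => sub_eq_zero.2 hy.symm
  have hΦ : DifferentiableAt ℂ (fun p => definingEq Q' (prodMap f g ft gt p)) p :=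
    hcomp.differentiableAt
  have htan := ((HasFDerivAt.comp x hΦ.hasFDerivAt hgr.differentiableAt.hasFDerivAt
    ).congr_of_eventuallyEq hzero.symm).unique (hasFDerivAt_const (0 : ℂ) x)
  have hgr1 : ∀ a b, ∃ c, fderiv ℂ (graphMap Q) x (a, b) = ((a, c), b) := by
    intro a b
    have hd := hgr.differentiableAt.hasFDerivAt
    have h1 := ((ContinuousLinearMap.fst ℂ (Fin n → ℂ) ℂ).comp
      (ContinuousLinearMap.fst ℂ ((Fin n → ℂ) × ℂ) ((Fin n → ℂ) × ℂ))).hasFDerivAt.comp x hd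
    have h2 := (ContinuousLinearMap.snd ℂ ((Fin n → ℂ) × ℂ) ((Fin n → ℂ) × ℂ)).hasFDerivAt.comp x hd
    have h3 := congrArg (fun L => L (a, b)) (h1.unique hasFDerivAt_fst)
    have h4 := congrArg (fun L => L (a, b)) (h2.unique hasFDerivAt_snd)
    exact ⟨(fderiv ℂ (graphMap Q) x (a, b)).1.2, Prod.ext (Prod.ext h3 rfl) h4⟩
  have hall : ∀ v, fderiv ℂ (fun p => definingEq Q' (prodMap f g ft gt p)) p v = 0 := by
    rintro ⟨⟨a, w⟩, b⟩
    obtain ⟨c, hc⟩ := hgr1 a b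
    have h1 := congrArg (fun L => L (a, b)) htan
    simp only [ContinuousLinearMap.comp_apply, hc, zero_apply] at h1
    have h2 : ((a, w), b) = ((a, c), b) + (w - c) • (((0 : Fin n → ℂ), (1 : ℂ)),
        (0 : (Fin n → ℂ) × ℂ)) := by simp
    rw [h2, map_add, map_smul, h1]
    have hu' : fderiv ℂ (fun p => definingEq Q' (prodMap f g ft gt p)) p ((0, 1), 0) = 0 := hu
    simp [hu']
  have hfd := hcomp.fderiv
  rw [Function.comp_def] at hfd
  simp only [hfd, ContinuousLinearMap.comp_apply, ContinuousLinearMap.prod_apply,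
    ContinuousLinearMap.coe_fst', ContinuousLinearMap.coe_snd'] at hall
  constructor
  · by_contra hdet
    obtain ⟨v, hv⟩ := surjective_of_jacFull_det_ne_zero hf hg hdet (0, 1)
    have := hall (v, 0)
    rw [map_zero] at this
    exact hx1 (by rw [← this]; exact congrArg (fun y => fderiv ℂ (definingEq Q') _ (y, 0)) hv.symm)
  · by_contra hdet
    obtain ⟨v, hv⟩ := surjective_of_jacFull_det_ne_zero hft hgt hdet (0, 1)
    have := hall (0, v)
    rw [map_zero] at this
    exact hx2 (by rw [← this]; exact congrArg (fun y => fderiv ℂ (definingEq Q') _ (0, y)) hv.symm)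

end Transversality

section Transversality

variable {Q P Q' P' : (Fin n → ℂ) → (Fin n → ℂ) → ℂ → ℂ}
  {f ft : (Fin n → ℂ) → ℂ → Fin n → ℂ} {g gt : (Fin n → ℂ) → ℂ → ℂ}

theorem SegreMap.analyticAt_jacFull (h : SegreMap Q P Q' P' f g ft gt) :
    AnalyticAt ℂ (fun p => (jacFull f g p).det) 0 :=
  analyticAt_jacFull_det h.analytic_f h.analytic_g

/-- An analytic function vanishing on the Segre variety family `w = P (χ, z, 0)` vanishes. -/
theorem SegrePair.eventually_zero_of_zero_on_graph (hn : 1 ≤ n) (h : SegrePair Q P)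
    (hsep : FrequentlySeparating Q) {K : (Fin n → ℂ) × ℂ → ℂ} (hK : AnalyticAt ℂ K 0)
    (hz : ∀ᶠ x in 𝓝 (0 : (Fin n → ℂ) × (Fin n → ℂ)), K (x.1, Q x.1 x.2 0) = 0) :
    ∀ᶠ p in 𝓝 0, K p = 0 := by
  have key := eventually_zero_of_degenerate h.analytic_slice h.apply_zero
    (h := fun _ : Fin n → ℂ => (0 : ℂ)) analyticAt_const rfl ?_
    (Ψ := fun y : (Fin n → ℂ) × ℂ × ℂ => K (y.1, y.2.1)) ?_ hz
  · exact (Continuous.tendsto' (f := fun p : (Fin n → ℂ) × ℂ => (p.1, p.2, (0 : Fin n → ℂ)))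
      (by fun_prop) 0 0 rfl).eventually key
  · refine (hsep.and_eventually (eventually_separating h.analytic_slice)).mono ?_
    rintro p₀ ⟨h1, h2⟩
    filter_upwards [h2 h1] with p hp
    refine ⟨fun _ => 1, by simp, fun hzero => ?_⟩
    exact one_ne_zero (congrFun (hp _ hzero) ⟨0, hn⟩)
  · exact AnalyticAt.comp (f := fun y : (Fin n → ℂ) × ℂ × ℂ => (y.1, y.2.1)) hK
      (analyticAt_fst.prod (analyticAt_fst.comp analyticAt_snd))

theorem SegreMap.transversalDeriv_zero_ne_zero (hn : 1 ≤ n) (h : SegreMap Q P Q' P' f g ft gt)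
    (hsep : FrequentlySeparating P)
    (hJ : ¬ ∀ᶠ p in 𝓝 (0 : (Fin n → ℂ) × ℂ), (jacFull f g p).det = 0)
    (hJt : ¬ ∀ᶠ p in 𝓝 (0 : (Fin n → ℂ) × ℂ), (jacFull ft gt p).det = 0) :
    transversalDeriv Q Q' f g ft gt 0 ≠ 0 := by
  intro h0
  set U := transversalDeriv Q Q' f g ft gt with hU
  have hJan : AnalyticAt ℂ (fun p => (jacFull f g p).det) 0 := h.analyticAt_jacFull
  have hJtan : AnalyticAt ℂ (fun p => (jacFull ft gt p).det) 0 := h.symm.analyticAt_jacFull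
  have hUdet := h.det_eq_zero_of_transversalDeriv
  have hz : ∀ᶠ z in 𝓝 (0 : Fin n → ℂ), U (z, 0) = 0 :=
    eventually_zero_of_zero_subset_cylinder h.analyticAt_transversalDeriv hJtan hJt
      (hUdet.mono fun x hx hx0 => (hx hx0).2) h0
  let σ : (Fin n → ℂ) × (Fin n → ℂ) × ℂ → (Fin n → ℂ) × (Fin n → ℂ) × ℂ :=
    fun y => (y.2.1, y.1, P y.1 y.2.1 y.2.2)
  have hσ : AnalyticAt ℂ σ 0 :=
    (analyticAt_fst.comp analyticAt_snd).prod (analyticAt_fst.prod h.source.analytic')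
  have hσ0 : σ 0 = 0 := by
    simp only [σ, Prod.fst_zero, Prod.snd_zero, h.source.symm.apply_zero]
    rfl
  have hσt : Tendsto σ (𝓝 0) (𝓝 0) := by
    have := hσ.continuousAt.tendsto
    rwa [hσ0] at this
  have hswap : Tendsto (fun y : (Fin n → ℂ) × (Fin n → ℂ) × ℂ => (y.2.1, y.1, y.2.2)) (𝓝 0) (𝓝 0) :=
    Continuous.tendsto' (by fun_prop) _ _ rfl
  have hUσ : AnalyticAt ℂ (fun y => U (σ y)) 0 :=
    AnalyticAt.comp (g := U) (by rw [hσ0]; exact h.analyticAt_transversalDeriv) hσ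
  have hUσdet : ∀ᶠ y in 𝓝 (0 : (Fin n → ℂ) × (Fin n → ℂ) × ℂ), U (σ y) = 0 →
      (jacFull f g y.2).det = 0 ∧ (jacFull ft gt (y.1, P y.1 y.2.1 y.2.2)).det = 0 := by
    filter_upwards [hσt.eventually hUdet, hswap.eventually h.source.comp] with y h1 h2 hy
    have h3 := h1 hy
    simp only [σ] at h3
    rwa [h2] at h3
  have hin : Tendsto (fun z : Fin n → ℂ => (z, (0 : ℂ))) (𝓝 0) (𝓝 0) :=
    Continuous.tendsto' (by fun_prop) _ _ rfl
  have hJloc : ∀ᶠ p in 𝓝 (0 : (Fin n → ℂ) × ℂ), ¬ ∀ᶠ q in 𝓝 p, (jacFull f g q).det = 0 := by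
    rw [← Filter.not_frequently]
    exact mt (eventually_zero_of_frequently_locally_zero hJan) hJ
  have hJt0 : ∀ᶠ z in 𝓝 (0 : Fin n → ℂ), ∀ᶠ χ in 𝓝 (0 : Fin n → ℂ),
      (jacFull ft gt (χ, P χ z 0)).det = 0 := by
    filter_upwards [hz, hin.eventually hJloc, hin.eventually hJan.eventually_analyticAt,
      hin.eventually (eventually_nhds_slice (hUσ.eventually_analyticAt.and hUσdet)),
      hin.eventually h.source.normal_left'] with z h1 h2 h3 h4 h5
    have hzero := eventually_zero_of_zero_subset_cylinder h4.self_of_nhds.1 h3 h2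
      (h4.mono fun y hy hy0 => (hy.2 hy0).1) (by simp only [σ, h5]; exact h1)
    filter_upwards [hzero, eventually_nhds_slice_left h4] with χ h6 h7
    exact (h7.self_of_nhds.2 h6).2
  refine hJt (h.source.symm.eventually_zero_of_zero_on_graph hn hsep hJtan ?_)
  refine eventually_zero_of_locally_zero_slices (x₀ := (0 : Fin n → ℂ)) (y₀ := (0 : Fin n → ℂ))
    (F := fun x => (jacFull ft gt (x.1, P x.1 x.2 0)).det) ?_ hJt0.eventually_nhds.frequently
  refine AnalyticAt.comp (g := fun p => (jacFull ft gt p).det) ?_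
    (analyticAt_fst.prod h.source.symm.analytic_slice)
  rw [h.source.symm.apply_zero]
  exact hJtan

theorem SegreMap.exists_jacFull_det_ne_zero (h : SegreMap Q P Q' P' f g ft gt)
    (hJ : ¬ ∀ᶠ p in 𝓝 (0 : (Fin n → ℂ) × ℂ), (jacFull f g p).det = 0)
    (hJt : ¬ ∀ᶠ p in 𝓝 (0 : (Fin n → ℂ) × ℂ), (jacFull ft gt p).det = 0) :
    ∃ z₀ w₀ χ₀ τ₀, w₀ = Q z₀ χ₀ τ₀ ∧ (jacFull f g (z₀, w₀)).det ≠ 0 ∧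
      (jacFull ft gt (χ₀, τ₀)).det ≠ 0 := by
  by_contra! hcon
  have hG := h.source.analyticAt_graphMap
  rcases eventually_zero_or_of_mul (x₀ := (0 : (Fin n → ℂ) × (Fin n → ℂ) × ℂ))
    (F := fun x => (jacFull f g (graphMap Q x).1).det)
    (G := fun x => (jacFull ft gt (graphMap Q x).2).det)
    (AnalyticAt.comp (f := fun x => (graphMap Q x).1) (g := fun p => (jacFull f g p).det)
      (by rw [h.source.graphMap_zero]; exact h.analyticAt_jacFull) (analyticAt_fst.comp hG))
    (AnalyticAt.comp (f := fun x => (graphMap Q x).2) (g := fun p => (jacFull ft gt p).det)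
      (by rw [h.source.graphMap_zero]; exact h.symm.analyticAt_jacFull) (analyticAt_snd.comp hG))
    (Eventually.of_forall fun x => by
      rw [mul_eq_zero, or_iff_not_imp_left]
      exact fun h1 => hcon _ _ x.2.1 x.2.2 rfl h1) with h1 | h1
  · refine hJ ?_
    filter_upwards [(Continuous.tendsto' (f := fun p : (Fin n → ℂ) × ℂ =>
      (p.1, (0 : Fin n → ℂ), p.2)) (by fun_prop) 0 0 rfl).eventually h1,
      h.source.normal_right] with p h2 h3
    simp only [graphMap, h3] at h2
    exact h2
  · exact hJt ((Continuous.tendsto' (f := fun p : (Fin n → ℂ) × ℂ => ((0 : Fin n → ℂ), p))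
      (by fun_prop) 0 0 rfl).eventually h1)

theorem SegreMap.classC_target (h : SegreMap Q P Q' P' f g ft gt)
    (hsep : FrequentlySeparating Q) (hu : transversalDeriv Q Q' f g ft gt 0 ≠ 0)
    (hJ : ¬ ∀ᶠ χ in 𝓝 (0 : Fin n → ℂ), (jacz ft χ).det = 0) : ClassC Q' := by
  refine classC_of_frequently_separating h.target.analytic_slice ?_
  have hin : Tendsto (fun χ : Fin n → ℂ => (χ, (0 : ℂ))) (𝓝 0) (𝓝 0) :=
    Continuous.tendsto' (by fun_prop) _ _ rfl
  have hft : AnalyticAt ℂ (fun χ => ft χ 0) 0 :=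
    AnalyticAt.comp (f := fun χ : Fin n → ℂ => (χ, (0 : ℂ)))
      (g := fun p : (Fin n → ℂ) × ℂ => ft p.1 p.2) h.analytic_ft (by fun_prop)
  have hftt : Tendsto (fun χ => ft χ 0) (𝓝 0) (𝓝 0) := by
    have := hft.continuousAt.tendsto
    rwa [h.ft_zero] at this
  have hJloc : ∀ᶠ χ in 𝓝 (0 : Fin n → ℂ), ¬ ∀ᶠ q in 𝓝 χ, (jacz ft q).det = 0 := by
    rw [← Filter.not_frequently]
    exact mt (eventually_zero_of_frequently_locally_zero (analyticAt_jacz_det hft)) hJ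
  have hgood : ∃ᶠ χ in 𝓝 (0 : Fin n → ℂ), (jacz ft χ).det ≠ 0 ∧
      Separating (fun x : (Fin n → ℂ) × (Fin n → ℂ) => Q x.1 x.2 0) χ := by
    refine frequently_frequently_nhds.1 (hsep.and_eventually
      (hJloc.and (eventually_separating h.source.analytic_slice)) |>.mono ?_)
    rintro χ ⟨h1, h2, h3⟩
    exact (Filter.not_eventually.1 h2).and_eventually (h3 h1)
  refine hftt.frequently (hgood.mp ?_)
  set Φ := fun p => definingEq Q' (prodMap f g ft gt p) with hΦ
  have hslices := hin.eventually (eventually_nhds_slice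
    (h.maps.eventually_nhds.and ((h.analyticAt_transversalDeriv.continuousAt.eventually_ne hu).and
      (h.source.analytic.eventually_analyticAt.and (h.source.tendsto_graphMap.eventually
        h.analyticAt_definingEq_prodMap.eventually_analyticAt)))))
  have hQslices := eventually_nhds_slice (E := Fin n → ℂ)
    h.source.analytic_slice.eventually_analyticAt
  have hQ'slices := hftt.eventually (eventually_nhds_slice (E := Fin n → ℂ)
    h.target.analytic_slice.eventually_analyticAt)
  filter_upwards [hslices, hQslices, hQ'slices, h.eventually_gt_zero.eventually_nhds,
    hft.eventually_analyticAt, hin.eventually h.source.normal_left]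
    with χ hχ hQχ hQ'χ hgtχ hftχ hnorm ⟨hdet, hsepχ⟩ v' hv'
  obtain ⟨v, rfl⟩ : ∃ v, fderiv ℂ (fun χ => ft χ 0) χ v = v' := by
    refine ⟨(jacz ft χ)⁻¹.mulVec v', ?_⟩
    rw [← jacz_mulVec hftχ.differentiableAt, Matrix.mulVec_mulVec,
      Matrix.mul_nonsing_inv _ (isUnit_iff_ne_zero.2 hdet), Matrix.one_mulVec]
  suffices hv : v = 0 by rw [hv, map_zero]
  refine hsepχ v ?_
  have hf0 : Tendsto (fun z => f z (Q z χ 0)) (𝓝 0) (𝓝 0) := by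
    have h1 : ContinuousAt (fun z => Q z χ 0) 0 :=
      ContinuousAt.comp (f := fun z : Fin n → ℂ => (z, χ))
        (g := fun x : (Fin n → ℂ) × (Fin n → ℂ) => Q x.1 x.2 0)
        hQχ.self_of_nhds.continuousAt (by fun_prop)
    have h2 : ContinuousAt (fun z => f z (Q z χ 0)) 0 :=
      ContinuousAt.comp (f := fun z : Fin n → ℂ => (z, Q z χ 0))
        (g := fun p : (Fin n → ℂ) × ℂ => f p.1 p.2)
        (by rw [hnorm]; exact h.analytic_f.continuousAt) (continuousAt_id.prodMk h1)
    have h3 := h2.tendsto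
    rwa [hnorm, h.f_zero] at h3
  filter_upwards [hf0.eventually hv', hf0.eventually (eventually_nhds_slice_left hQ'χ),
    eventually_nhds_slice_left hχ, eventually_nhds_slice_left hQχ] with z h1 h2 h3 h4
  obtain ⟨hmaps, huz, -, hΦz⟩ := h3.self_of_nhds
  have hq := h4.self_of_nhds.differentiableAt
  have hq' := h2.self_of_nhds.differentiableAt
  have hΦd : HasFDerivAt Φ _ ((z, Q z χ 0), (χ, 0)) := hΦz.differentiableAt.hasFDerivAt
  have hqd : HasFDerivAt (fun y : Fin n → ℂ => Q z y 0) _ χ :=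
    HasFDerivAt.comp (f := fun y : Fin n → ℂ => (z, y))
      (g := fun x : (Fin n → ℂ) × (Fin n → ℂ) => Q x.1 x.2 0) χ hq.hasFDerivAt
      (hasFDerivAt_prodMk_right z χ)
  have hc1 := hΦd.comp (f := fun y : Fin n → ℂ => ((z, Q z y 0), (y, (0 : ℂ)))) χ
    (((hasFDerivAt_const z χ).prodMk hqd).prodMk (hasFDerivAt_prodMk_left χ (0 : ℂ)))
  have hc2 := hΦd.comp (f := fun y : Fin n → ℂ => ((z, Q z χ 0), (y, (0 : ℂ)))) χ
    ((hasFDerivAt_const (z, Q z χ 0) χ).prodMk (hasFDerivAt_prodMk_left χ (0 : ℂ)))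
  have e1 : (fun y : Fin n → ℂ => Φ ((z, Q z y 0), (y, 0))) =ᶠ[𝓝 χ] fun _ => 0 := by
    filter_upwards [(Continuous.tendsto (f := fun y : Fin n → ℂ => (z, y, (0 : ℂ)))
      (by fun_prop) χ).eventually hmaps] with y hy
    exact sub_eq_zero.2 hy.symm
  have e2 : (fun y : Fin n → ℂ => Φ ((z, Q z χ 0), (y, 0))) =ᶠ[𝓝 χ]
      fun y => Q' (f z (Q z χ 0)) (ft y 0) 0 - g z (Q z χ 0) := by
    filter_upwards [hgtχ] with y hy
    simp only [hΦ, definingEq, prodMap, hy]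
  have hc3 := ((HasFDerivAt.comp (f := fun y : Fin n → ℂ => (f z (Q z χ 0), ft y 0))
    (g := fun x : (Fin n → ℂ) × (Fin n → ℂ) => Q' x.1 x.2 0) χ hq'.hasFDerivAt
    ((hasFDerivAt_const (f z (Q z χ 0)) χ).prodMk hftχ.differentiableAt.hasFDerivAt)).sub_const
    (g z (Q z χ 0))).congr_of_eventuallyEq e2
  have k1 := congrArg (fun L => L v) ((hc1.congr_of_eventuallyEq e1.symm).unique
    (hasFDerivAt_const (0 : ℂ) χ))
  have k2 := congrArg (fun L => L v) (hc2.unique hc3)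
  simp only [ContinuousLinearMap.comp_apply, ContinuousLinearMap.prod_apply, zero_apply,
    ContinuousLinearMap.inr_apply, ContinuousLinearMap.inl_apply, h1] at k1 k2
  have hu' : fderiv ℂ Φ ((z, Q z χ 0), (χ, 0)) ((0, 1), 0) ≠ 0 := huz
  have k3 : (((0 : Fin n → ℂ), fderiv ℂ (fun x : (Fin n → ℂ) × (Fin n → ℂ) => Q x.1 x.2 0) (z, χ)
      (0, v)), (v, (0 : ℂ))) = fderiv ℂ (fun x : (Fin n → ℂ) × (Fin n → ℂ) => Q x.1 x.2 0) (z, χ)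
      (0, v) • (((0 : Fin n → ℂ), (1 : ℂ)), (0 : (Fin n → ℂ) × ℂ)) + (0, (v, 0)) := by simp
  rw [k3, map_add, map_smul, k2, add_zero, smul_eq_mul] at k1
  exact (mul_eq_zero.1 k1).resolve_right hu'

end Transversality

section Main

theorem IsRealNormalDF.frequentlySeparating {Q : (Fin n → ℂ) → (Fin n → ℂ) → ℂ → ℂ}
    (hQ : IsRealNormalDF Q) (hM : ClassC Q) :
    FrequentlySeparating Q ∧ FrequentlySeparating (QBar Q) := by
  have han := hQ.segrePair.analytic_slice
  have h1 := hM.frequently_separating han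
  refine ⟨h1, ?_⟩
  have hstar : Tendsto (star : (Fin n → ℂ) → Fin n → ℂ) (𝓝 0) (𝓝 0) :=
    continuous_star.tendsto' _ _ (star_zero _)
  refine hstar.frequently ((h1.and_eventually
    (eventually_nhds_slice (E := Fin n → ℂ) han.eventually_analyticAt)).mono ?_)
  rintro χ ⟨h2, h3⟩
  exact separating_QBar ((eventually_nhds_slice_left h3).mono fun z hz => hz.self_of_nhds) h2

theorem IsHSPM.segreMap
    {Q Q' : (Fin n → ℂ) → (Fin n → ℂ) → ℂ → ℂ}
    {f ft : (Fin n → ℂ) → ℂ → Fin n → ℂ} {g gt : (Fin n → ℂ) → ℂ → ℂ}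
    (hQ : IsRealNormalDF Q) (hQ' : IsRealNormalDF Q') (h : IsHSPM Q Q' f g ft gt) :
    SegreMap Q (QBar Q) Q' (QBar Q') f g ft gt := by
  obtain ⟨hf, hg, hft, hgt, hf0, hg0, hft0, hgt0, hmaps⟩ := h
  exact ⟨hQ.segrePair, hQ'.segrePair, hf.self_of_nhds, hg.self_of_nhds, hft.self_of_nhds,
    hgt.self_of_nhds, hf0, hg0, hft0, hgt0, hmaps⟩

end Main

/-- Theorem 1.3: if `M` is of class `𝒞` at `0`, then either `ℋ` is
transversally null with `Q'(f, f̃, 0) ≡ 0`, or `ℋ` is Segre transversal, totally Segre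
nondegenerate, a biholomorphism near some point of `ℳ`, and `M'` is of class `𝒞` at `0`. -/
theorem statement2 (n : ℕ) (hn : 1 ≤ n)
    (Q Q' : (Fin n → ℂ) → (Fin n → ℂ) → ℂ → ℂ)
    (hQ : IsRealNormalDF Q) (hQ' : IsRealNormalDF Q')
    (hM : ClassC Q)
    (f ft : (Fin n → ℂ) → ℂ → Fin n → ℂ) (g gt : (Fin n → ℂ) → ℂ → ℂ)
    (hH : IsHSPM Q Q' f g ft gt) :
    (TransversallyNull g gt ∧
      ∀ᶠ p in 𝓝 (0 : ((Fin n → ℂ) × ℂ) × ((Fin n → ℂ) × ℂ)),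
        Q' (f p.1.1 p.1.2) (ft p.2.1 p.2.2) 0 = 0) ∨
    (SegreTransversal g ∧ TotallySegreNondeg f ft ∧
      (∃ (z₀ : Fin n → ℂ) (w₀ : ℂ) (χ₀ : Fin n → ℂ) (τ₀ : ℂ),
        w₀ = Q z₀ χ₀ τ₀ ∧
        (jacFull f g (z₀, w₀)).det ≠ 0 ∧ (jacFull ft gt (χ₀, τ₀)).det ≠ 0) ∧
      ClassC Q') := by
  have h := hH.segreMap hQ hQ'
  obtain ⟨hsep, hsep'⟩ := hQ.frequentlySeparating hM
  by_cases hJ : ∀ᶠ p in 𝓝 (0 : (Fin n → ℂ) × ℂ), (jacFull f g p).det = 0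
  · exact Or.inl (h.null_of_jacFull' hsep' hJ)
  by_cases hJt : ∀ᶠ p in 𝓝 (0 : (Fin n → ℂ) × ℂ), (jacFull ft gt p).det = 0
  · exact Or.inl (h.null_of_jacFull hsep hJt)
  have hu := h.transversalDeriv_zero_ne_zero hn hsep' hJ hJt
  have hft : ¬ ∀ᶠ χ in 𝓝 (0 : Fin n → ℂ), (jacz ft χ).det = 0 := fun hz =>
    hJ (jacFull_det_eq_zero_of_eventually_zero (h.g_eq_zero_of_jacz hsep hz))
  have hf : ¬ ∀ᶠ z in 𝓝 (0 : Fin n → ℂ), (jacz f z).det = 0 := fun hz =>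
    hJt (jacFull_det_eq_zero_of_eventually_zero (h.symm.g_eq_zero_of_jacz hsep' hz))
  refine Or.inr ⟨?_, ⟨hf, hft⟩, h.exists_jacFull_det_ne_zero hJ hJt, h.classC_target hsep hu hft⟩
  rw [h.transversalDeriv_zero, neg_ne_zero] at hu
  exact hu

end HSPMpaper
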